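/- arXiv:2407.05028 — 5 statements merged into one kernel-verified Lean document; each statement's English description precedes it below -/
import Mathlib

section
/- Let s and e be composable labelled transition systems and let i_s and i_e be input-enabled transition systems with I_{i_s} = I_s, U_{i_s} = U_s, I_{i_e} = I_e and U_{i_e} = U_e (so i_s and i_e are composable and i_s ∥ i_e has the same input and output labels as s ∥ e). If s mutually accepts e, i_s uioco s, and i_e uioco e, then i_s ∥ i_e uioco s ∥ e. -/
/-- Labels extended with the quiescence label `δ`. -/
inductive ELabel (Lab : Type) : Type
  | lab : Lab → ELabel Lab
  | delta : ELabel Lab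

namespace ELabel

/-- Membership of an extended label in `𝓛^δ = 𝓛 ∪ {δ}`. -/
def inL {Lab : Type} (Ls : Set Lab) : ELabel Lab → Prop
  | lab ℓ => ℓ ∈ Ls
  | delta => True

end ELabel

/-- A trace lies in `(𝓛^δ)*`. -/
def TraceIn {Lab : Type} (Ls : Set Lab) (σ : List (ELabel Lab)) : Prop :=
  ∀ x ∈ σ, ELabel.inL Ls x

/-- A labelled transition system.  `T q none q'` is an internal `τ`-step,
`T q (some ℓ) q'` is a step labelled `ℓ`. -/
structure LTS (Q : Type) (Lab : Type) where
  I : Set Lab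
  U : Set Lab
  T : Q → Option Lab → Q → Prop
  q0 : Q

namespace LTS

variable {Q Lab : Type}

/-- The label set `L = I ∪ U`. -/
def L (M : LTS Q Lab) : Set Lab := M.I ∪ M.U

/-- Standing assumptions on all LTSs: countable, disjoint input/output label
sets, transitions labelled within `L`, strong convergence (no infinite
`τ`-sequences), and image-finiteness. -/
def WellFormed (M : LTS Q Lab) : Prop :=
  M.I.Countable ∧ M.U.Countable ∧ Disjoint M.I M.U ∧
  (∀ q ℓ q', M.T q (some ℓ) q' → ℓ ∈ M.L) ∧
  (¬ ∃ f : ℕ → Q, ∀ n, M.T (f n) none (f (n + 1))) ∧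
  (∀ q a, {q' | M.T q a q'}.Finite)

/-- A state is quiescent if neither an output nor `τ` is enabled in it. -/
def Quiescent (M : LTS Q Lab) (q : Q) : Prop :=
  (∀ x ∈ M.U, ∀ q', ¬ M.T q (some x) q') ∧ ∀ q', ¬ M.T q none q'

/-- A single visible step `q --x--> q'` for `x ∈ L^δ`, where the quiescence
label `δ` gives a self-loop at quiescent states. -/
def VStep (M : LTS Q Lab) (q : Q) : ELabel Lab → Q → Prop
  | .lab ℓ, q' => M.T q (some ℓ) q'
  | .delta, q' => q' = q ∧ M.Quiescent q

/-- Zero or more `τ`-steps: `q ==ε==> q'`. -/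
def Eps (M : LTS Q Lab) : Q → Q → Prop :=
  Relation.ReflTransGen fun a b => M.T a none b

/-- Weak transition `q ==σ==> q'` for `σ ∈ (L^δ)*`. -/
inductive W (M : LTS Q Lab) : Q → List (ELabel Lab) → Q → Prop
  | nil {q q' : Q} : M.Eps q q' → W M q [] q'
  | snoc {q q1 q2 q' : Q} {σ : List (ELabel Lab)} {x : ELabel Lab} :
      W M q σ q1 → M.VStep q1 x q2 → M.Eps q2 q' → W M q (σ ++ [x]) q'

/-- `X after σ`, for a set of states `X`. -/
def afterSet (M : LTS Q Lab) (X : Set Q) (σ : List (ELabel Lab)) : Set Q :=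
  {q' | ∃ q ∈ X, M.W q σ q'}

/-- `M after σ`, from the initial state. -/
def after (M : LTS Q Lab) (σ : List (ELabel Lab)) : Set Q :=
  {q' | M.W M.q0 σ q'}

/-- The predicate underlying `out(q) ⊆ U ∪ {δ}`. -/
def outLabel (M : LTS Q Lab) (q : Q) : ELabel Lab → Prop
  | .lab ℓ => ℓ ∈ M.U ∧ ∃ q', M.T q (some ℓ) q'
  | .delta => M.Quiescent q

/-- `out(q)`. -/
def outq (M : LTS Q Lab) (q : Q) : Set (ELabel Lab) :=
  {x | M.outLabel q x}

/-- `in(q) = {ℓ ∈ I | q ==ℓ==>}`. -/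
def inq (M : LTS Q Lab) (q : Q) : Set Lab :=
  {ℓ | ℓ ∈ M.I ∧ ∃ q', M.W q [ELabel.lab ℓ] q'}

/-- `out(X) = ⋃_{q ∈ X} out(q)`. -/
def outSet (M : LTS Q Lab) (X : Set Q) : Set (ELabel Lab) :=
  ⋃ q ∈ X, M.outq q

/-- `in(X) = ⋂_{q ∈ X} in(q)`. -/
def inSet (M : LTS Q Lab) (X : Set Q) : Set Lab :=
  ⋂ q ∈ X, M.inq q

/-- Input-enabledness: `M` is an IOTS. -/
def InputEnabled (M : LTS Q Lab) : Prop :=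
  ∀ q, ∀ ℓ ∈ M.I, ∃ q', M.W q [ELabel.lab ℓ] q'

/-- `Utraces(M)`. -/
def Utraces (M : LTS Q Lab) : Set (List (ELabel Lab)) :=
  {σ | TraceIn M.L σ ∧ (∃ q', M.W M.q0 σ q') ∧
    ∀ σ1 ℓ σ2, σ = σ1 ++ ELabel.lab ℓ :: σ2 → ℓ ∈ M.I →
      ∀ q, M.W M.q0 σ1 q → ∃ q', M.W q [ELabel.lab ℓ] q'}

/-- An LTS is utrace-closed when every trace over `(L^δ)*` that it can
perform is a utrace. -/
def UtraceClosed (M : LTS Q Lab) : Prop :=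
  ∀ σ : List (ELabel Lab), TraceIn M.L σ → (∃ q', M.W M.q0 σ q') → σ ∈ M.Utraces

end LTS

/-- `i uioco s`. -/
def Uioco {Qi Qs Lab : Type} (i : LTS Qi Lab) (s : LTS Qs Lab) : Prop :=
  ∀ σ ∈ s.Utraces, i.outSet (i.after σ) ⊆ s.outSet (s.after σ)

/-- Composability: disjoint output label sets. -/
def Composable {Qs Qe Lab : Type} (s : LTS Qs Lab) (e : LTS Qe Lab) : Prop :=
  s.U ∩ e.U = ∅

/-- Parallel composition `s ∥ e`. -/
def par {Qs Qe Lab : Type} (s : LTS Qs Lab) (e : LTS Qe Lab) : LTS (Qs × Qe) Lab where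
  I := (s.I \ e.U) ∪ (e.I \ s.U)
  U := s.U ∪ e.U
  T := fun p a p' =>
    match a with
    | none =>
        (s.T p.1 none p'.1 ∧ p'.2 = p.2) ∨ (e.T p.2 none p'.2 ∧ p'.1 = p.1)
    | some ℓ =>
        (ℓ ∈ s.L ∧ ℓ ∉ e.L ∧ s.T p.1 (some ℓ) p'.1 ∧ p'.2 = p.2) ∨
        (ℓ ∈ e.L ∧ ℓ ∉ s.L ∧ e.T p.2 (some ℓ) p'.2 ∧ p'.1 = p.1) ∨
        (ℓ ∈ s.L ∧ ℓ ∈ e.L ∧ s.T p.1 (some ℓ) p'.1 ∧ e.T p.2 (some ℓ) p'.2)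
  q0 := (s.q0, e.q0)

/-- `s accepts e`: along utraces of `s ∥ e`, every output of `e` that is an
input of `s` is (weakly) enabled in `s`. -/
def Accepts {Qs Qe Lab : Type} (s : LTS Qs Lab) (e : LTS Qe Lab) : Prop :=
  ∀ σ ∈ (par s e).Utraces, ∀ qs qe, (par s e).W (par s e).q0 σ (qs, qe) →
    ∀ ℓ, ELabel.lab ℓ ∈ e.outq qe → ℓ ∈ s.I → ℓ ∈ s.inq qs

/-- `s mutually accepts e`. -/
def MutuallyAccepts {Qs Qe Lab : Type} (s : LTS Qs Lab) (e : LTS Qe Lab) : Prop :=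
  Accepts s e ∧ Accepts e s

/-- `R` is an ecosim for `s` and `e`. -/
def IsEcosim {Qs Qe Lab : Type} (s : LTS Qs Lab) (e : LTS Qe Lab)
    (R : Set (Set Qs × Set Qe)) : Prop :=
  (s.after [], e.after []) ∈ R ∧
  ∀ Xs Xe, (Xs, Xe) ∈ R →
    (∀ ℓ, ELabel.lab ℓ ∈ e.outSet Xe → ℓ ∈ s.I →
      ℓ ∈ s.inSet Xs ∧
        (s.afterSet Xs [ELabel.lab ℓ], e.afterSet Xe [ELabel.lab ℓ]) ∈ R) ∧
    (∀ ℓ, ELabel.lab ℓ ∈ s.outSet Xs → ℓ ∈ e.I →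
      ℓ ∈ e.inSet Xe ∧
        (s.afterSet Xs [ELabel.lab ℓ], e.afterSet Xe [ELabel.lab ℓ]) ∈ R) ∧
    (∀ ℓ, (ELabel.lab ℓ ∈ e.outSet Xe ∨ ℓ ∈ e.inSet Xe) → ℓ ∉ s.L →
      (Xs, e.afterSet Xe [ELabel.lab ℓ]) ∈ R) ∧
    (∀ ℓ, (ELabel.lab ℓ ∈ s.outSet Xs ∨ ℓ ∈ s.inSet Xs) → ℓ ∉ e.L →
      (s.afterSet Xs [ELabel.lab ℓ], Xe) ∈ R) ∧
    (∀ ℓ, ℓ ∈ s.inSet Xs → ℓ ∈ e.inSet Xe →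
      (s.afterSet Xs [ELabel.lab ℓ], e.afterSet Xe [ELabel.lab ℓ]) ∈ R) ∧
    (ELabel.delta ∈ s.outSet Xs → ELabel.delta ∈ e.outSet Xe →
      (s.afterSet Xs [ELabel.delta], e.afterSet Xe [ELabel.delta]) ∈ R)

/-- `s eco e`: there exists an ecosim for `s` and `e`. -/
def Eco {Qs Qe Lab : Type} (s : LTS Qs Lab) (e : LTS Qe Lab) : Prop :=
  ∃ R, IsEcosim s e R

/-- `R_U(s,e)`: the smallest relation closed under the given rules. -/
inductive RU {Qs Qe Lab : Type} (s : LTS Qs Lab) (e : LTS Qe Lab) :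
    Set Qs → Set Qe → Prop
  | base : RU s e (s.after []) (e.after [])
  | syncOutE {Xs : Set Qs} {Xe : Set Qe} (ℓ : Lab) :
      RU s e Xs Xe → ELabel.lab ℓ ∈ e.outSet Xe → ℓ ∈ s.I →
      RU s e (s.afterSet Xs [ELabel.lab ℓ]) (e.afterSet Xe [ELabel.lab ℓ])
  | syncOutS {Xs : Set Qs} {Xe : Set Qe} (ℓ : Lab) :
      RU s e Xs Xe → ELabel.lab ℓ ∈ s.outSet Xs → ℓ ∈ e.I →
      RU s e (s.afterSet Xs [ELabel.lab ℓ]) (e.afterSet Xe [ELabel.lab ℓ])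
  | internalE {Xs : Set Qs} {Xe : Set Qe} (ℓ : Lab) :
      RU s e Xs Xe → (ELabel.lab ℓ ∈ e.outSet Xe ∨ ℓ ∈ e.inSet Xe) → ℓ ∉ s.L →
      RU s e Xs (e.afterSet Xe [ELabel.lab ℓ])
  | internalS {Xs : Set Qs} {Xe : Set Qe} (ℓ : Lab) :
      RU s e Xs Xe → (ELabel.lab ℓ ∈ s.outSet Xs ∨ ℓ ∈ s.inSet Xs) → ℓ ∉ e.L →
      RU s e (s.afterSet Xs [ELabel.lab ℓ]) Xe
  | syncIn {Xs : Set Qs} {Xe : Set Qe} (ℓ : Lab) :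
      RU s e Xs Xe → ℓ ∈ s.inSet Xs → ℓ ∈ e.inSet Xe →
      RU s e (s.afterSet Xs [ELabel.lab ℓ]) (e.afterSet Xe [ELabel.lab ℓ])
  | qdelta {Xs : Set Qs} {Xe : Set Qe} :
      RU s e Xs Xe → ELabel.delta ∈ s.outSet Xs → ELabel.delta ∈ e.outSet Xe →
      RU s e (s.afterSet Xs [ELabel.delta]) (e.afterSet Xe [ELabel.delta])

open Classical in
/-- Projection `σ↾𝓛^δ` of a trace onto an (extended) label set: keeps `δ`
and the labels in `Ls`, removes all other labels. -/
noncomputable def projD {Lab : Type} (σ : List (ELabel Lab)) (Ls : Set Lab) :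
    List (ELabel Lab) :=
  σ.filter fun x => decide (ELabel.inL Ls x)

open Classical in
/-- Projection `σ↾𝓛` of a trace of plain labels onto a label set. -/
noncomputable def projL {Lab : Type} (σ : List Lab) (Ls : Set Lab) : List Lab :=
  σ.filter fun ℓ => decide (ℓ ∈ Ls)

open Classical in
/-- Substitution `σ[θ/δ]` of the label `θ` by the quiescence label `δ`. -/
noncomputable def substTheta {Lab : Type} (θ : Lab) (σ : List Lab) :
    List (ELabel Lab) :=
  σ.map fun ℓ => if ℓ = θ then ELabel.delta else ELabel.lab ℓ

/-- `⟨X⟩`: componentwise collection of a set of pairs of states. -/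
def collect {Qs Qe : Type} (X : Set (Qs × Qe)) : Set Qs × Set Qe :=
  (Prod.fst '' X, Prod.snd '' X)

/-- `q_s accepts q_e over σ`. -/
def AcceptsOver {Qs Qe Lab : Type} (s : LTS Qs Lab) (e : LTS Qe Lab)
    (qs : Qs) (qe : Qe) (σ : List (ELabel Lab)) : Prop :=
  ∀ σ1 σ2 : List (ELabel Lab), σ1 ++ σ2 = σ →
    ∀ (qs' : Qs) (qe' : Qe), (par s e).W (qs, qe) σ1 (qs', qe') →
      ∀ ℓ, ELabel.lab ℓ ∈ e.outq qe' → ℓ ∈ s.I → ℓ ∈ s.inq qs' ∧ ℓ ∈ e.U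

/-- `q_s mutually accepts q_e over σ`. -/
def MutuallyAcceptsOver {Qs Qe Lab : Type} (s : LTS Qs Lab) (e : LTS Qe Lab)
    (qs : Qs) (qe : Qe) (σ : List (ELabel Lab)) : Prop :=
  AcceptsOver s e qs qe σ ∧ AcceptsOver e s qe qs σ

/-- A test case: a quasi-finite tree-shaped LTS without `τ`-transitions, with
terminal states `pass` and `fail` carrying input self-loops, a special
quiescence-observation input `θ`, at most one output transition per state,
and receptive to all inputs other than `θ`. -/
structure TestCase (Qt Lab : Type) extends LTS Qt Lab where
  passS : Qt
  failS : Qt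
  theta : Lab
  theta_input : theta ∈ I
  no_tau : ∀ q q', ¬ T q none q'
  tree : ∀ q, q ≠ q0 → q ≠ passS → q ≠ failS →
    ∃! p : Qt × Option Lab, T p.1 p.2 q
  pass_loops : ∀ ℓ ∈ I, T passS (some ℓ) passS
  pass_terminal : ∀ a q', T passS a q' → q' = passS ∧ ∃ ℓ ∈ I, a = some ℓ
  fail_loops : ∀ ℓ ∈ I, T failS (some ℓ) failS
  fail_terminal : ∀ a q', T failS a q' → q' = failS ∧ ∃ ℓ ∈ I, a = some ℓ
  one_output : ∀ q ℓ ℓ' q' q'', ℓ ∈ U → ℓ' ∈ U →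
    T q (some ℓ) q' → T q (some ℓ') q'' → ℓ = ℓ' ∧ q' = q''
  receptive : ∀ q, ∀ ℓ ∈ I, ℓ ≠ theta → ∃ q', T q (some ℓ) q'

/-- Test execution `t ⫿ i` of a test case `t` with an implementation `i`. -/
def testExec {Qt Qi Lab : Type} (t : TestCase Qt Lab) (i : LTS Qi Lab) :
    LTS (Qt × Qi) Lab where
  I := ∅
  U := i.U ∪ (t.toLTS.L \ {t.theta})
  T := fun p a p' =>
    match a with
    | none => i.T p.2 none p'.2 ∧ p'.1 = p.1
    | some ℓ =>
        (ℓ ∈ i.L ∧ ℓ ∉ t.toLTS.L ∧ i.T p.2 (some ℓ) p'.2 ∧ p'.1 = p.1) ∨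
        (ℓ ∈ t.toLTS.L ∧ ℓ ∉ i.L ∧ ℓ ≠ t.theta ∧ t.T p.1 (some ℓ) p'.1 ∧ p'.2 = p.2) ∨
        (ℓ ∈ i.L ∧ ℓ ∈ t.toLTS.L ∧ t.T p.1 (some ℓ) p'.1 ∧ i.T p.2 (some ℓ) p'.2) ∨
        (ℓ = t.theta ∧ t.T p.1 (some ℓ) p'.1 ∧ p'.2 = p.2 ∧ i.Quiescent p.2)
  q0 := (t.q0, i.q0)

namespace CT
open LTS

variable {Q Qs Qe Lab : Type}

lemma W_inv {M : LTS Q Lab} {q q' : Q} {τ : List (ELabel Lab)} (h : M.W q τ q') :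
    (τ = [] ∧ M.Eps q q') ∨ ∃ σ x q1 q2, τ = σ ++ [x] ∧ M.W q σ q1 ∧ M.VStep q1 x q2 ∧
      M.Eps q2 q' := by
  cases h with
  | nil h => exact Or.inl ⟨rfl, h⟩
  | snoc h1 h2 h3 => exact Or.inr ⟨_, _, _, _, rfl, h1, h2, h3⟩

lemma W_nil {M : LTS Q Lab} {q q' : Q} : M.W q [] q' ↔ M.Eps q q' := by
  constructor
  · intro h
    rcases W_inv h with h | ⟨σ, x, _, _, h, _⟩
    · exact h.2
    · simp at h
  · exact W.nil

lemma W_snoc {M : LTS Q Lab} {q q' : Q} {σ : List (ELabel Lab)} {x : ELabel Lab} :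
    M.W q (σ ++ [x]) q' ↔ ∃ q1 q2, M.W q σ q1 ∧ M.VStep q1 x q2 ∧ M.Eps q2 q' := by
  constructor
  · intro h
    rcases W_inv h with h | ⟨σ', x', q1, q2, h, h1, h2, h3⟩
    · simp at h
    · obtain ⟨rfl, h⟩ := List.append_inj' h rfl
      obtain rfl : x = x' := by simpa using h
      exact ⟨q1, q2, h1, h2, h3⟩
  · rintro ⟨q1, q2, h1, h2, h3⟩
    exact W.snoc h1 h2 h3

lemma W_single {M : LTS Q Lab} {q q' : Q} {x : ELabel Lab} :
    M.W q [x] q' ↔ ∃ q1 q2, M.Eps q q1 ∧ M.VStep q1 x q2 ∧ M.Eps q2 q' := by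
  have := W_snoc (M := M) (q := q) (q' := q') (σ := []) (x := x)
  simpa [W_nil] using this

lemma W_eps {M : LTS Q Lab} {q q1 q' : Q} {σ : List (ELabel Lab)} (h : M.W q σ q1)
    (h' : M.Eps q1 q') : M.W q σ q' := by
  rcases W_inv h with ⟨rfl, h0⟩ | ⟨σ', x', a, b, rfl, h1, h2, h3⟩
  · exact W.nil (Relation.ReflTransGen.trans h0 h')
  · exact W.snoc h1 h2 (Relation.ReflTransGen.trans h3 h')

lemma W_split {M : LTS Q Lab} {q : Q} (σ1 σ2 : List (ELabel Lab)) :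
    ∀ q', M.W q (σ1 ++ σ2) q' → ∃ r, M.W q σ1 r := by
  induction σ2 using List.reverseRecOn with
  | nil => intro q' h; exact ⟨q', by simpa using h⟩
  | append_singleton l x ih =>
    intro q' h
    rw [← List.append_assoc, W_snoc] at h
    obtain ⟨q1, _, h, _⟩ := h
    exact ih _ h

lemma Utraces_prefix {M : LTS Q Lab} {σ1 σ2 : List (ELabel Lab)}
    (h : σ1 ++ σ2 ∈ M.Utraces) : σ1 ∈ M.Utraces := by
  obtain ⟨h1, ⟨q, h2⟩, h3⟩ := h
  refine ⟨fun x hx => h1 x (by simp [hx]), W_split _ _ _ h2, ?_⟩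
  rintro a l b rfl
  exact h3 a l (b ++ σ2) (by simp)

lemma eps_par {M : LTS Qs Lab} {N : LTS Qe Lab} {p q : Qs × Qe} :
    (par M N).Eps p q ↔ M.Eps p.1 q.1 ∧ N.Eps p.2 q.2 := by
  constructor
  · intro h
    induction h with
    | refl => exact ⟨.refl, .refl⟩
    | tail _ h ih =>
      rcases h with ⟨h, h'⟩ | ⟨h, h'⟩
      · exact ⟨ih.1.tail h, h' ▸ ih.2⟩
      · exact ⟨h' ▸ ih.1, ih.2.tail h⟩
  · obtain ⟨p1, p2⟩ := p
    obtain ⟨q1, q2⟩ := q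
    rintro ⟨h1, h2⟩
    have a : (par M N).Eps (p1, p2) (q1, p2) := by
      dsimp at h1
      clear h2
      induction h1 with
      | refl => exact .refl
      | tail _ h ih => exact ih.tail (Or.inl ⟨h, rfl⟩)
    have b : (par M N).Eps (q1, p2) (q1, q2) := by
      dsimp at h2
      clear h1 a
      induction h2 with
      | refl => exact .refl
      | tail _ h ih => exact ih.tail (Or.inr ⟨h, rfl⟩)
    exact Relation.ReflTransGen.trans a b

lemma par_T_swap {M : LTS Qs Lab} {N : LTS Qe Lab} {p q : Qs × Qe} {a : Option Lab}
    (h : (par M N).T p a q) : (par N M).T p.swap a q.swap := by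
  cases a with
  | none => simpa [par, or_comm] using h
  | some l =>
    rcases h with h | h | h
    · exact Or.inr (Or.inl h)
    · exact Or.inl h
    · exact Or.inr (Or.inr ⟨h.2.1, h.1, h.2.2.2, h.2.2.1⟩)

lemma par_Q_swap {M : LTS Qs Lab} {N : LTS Qe Lab} {p : Qs × Qe}
    (h : (par M N).Quiescent p) : (par N M).Quiescent p.swap := by
  refine ⟨fun x hx q' h' => h.1 x (Or.symm hx) q'.swap ?_, fun q' h' => h.2 q'.swap ?_⟩
  · simpa using par_T_swap h'
  · simpa using par_T_swap h'

lemma par_V_swap {M : LTS Qs Lab} {N : LTS Qe Lab} {p q : Qs × Qe} {x : ELabel Lab}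
    (h : (par M N).VStep p x q) : (par N M).VStep p.swap x q.swap := by
  cases x with
  | lab l => exact par_T_swap h
  | delta => exact ⟨by rw [h.1], par_Q_swap h.2⟩

lemma par_W_swap {M : LTS Qs Lab} {N : LTS Qe Lab} {p : Qs × Qe} {σ : List (ELabel Lab)} :
    ∀ {q}, (par M N).W p σ q → (par N M).W p.swap σ q.swap := by
  induction σ using List.reverseRecOn with
  | nil =>
    intro q h
    rw [W_nil, eps_par] at *
    exact h.symm
  | append_singleton l x ih =>
    intro q h
    rw [W_snoc] at *
    obtain ⟨a, b, h1, h2, h3⟩ := h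
    exact ⟨_, _, ih h1, par_V_swap h2, eps_par.2 (eps_par.1 h3).symm⟩

lemma Utraces_swap {M : LTS Qs Lab} {N : LTS Qe Lab} {σ : List (ELabel Lab)}
    (h : σ ∈ (par M N).Utraces) : σ ∈ (par N M).Utraces := by
  obtain ⟨h1, ⟨q, h2⟩, h3⟩ := h
  have hL : (par M N).L = (par N M).L := by
    simp only [L, par, Set.union_comm]
  refine ⟨hL ▸ h1, ⟨_, par_W_swap h2⟩, ?_⟩
  intro a l b hσ hl q hq
  obtain ⟨r, hr⟩ := h3 a l b hσ (Or.symm hl) q.swap (par_W_swap hq)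
  exact ⟨r.swap, by simpa using par_W_swap hr⟩

/-- standing facts -/
structure Std (M : LTS Qs Lab) (N : LTS Qe Lab) : Prop where
  tM : ∀ q l q', M.T q (some l) q' → l ∈ M.L
  tN : ∀ q l q', N.T q (some l) q' → l ∈ N.L
  dM : Disjoint M.I M.U
  dN : Disjoint N.I N.U
  c : ∀ l, l ∈ M.U → l ∉ N.U

lemma Std.swap {M : LTS Qs Lab} {N : LTS Qe Lab} (h : Std M N) : Std N M :=
  ⟨h.tN, h.tM, h.dN, h.dM, fun l h1 h2 => h.c l h2 h1⟩

def Half (M : LTS Qs Lab) (N : LTS Qe Lab) (a : Qs) (b : Qe) : Prop :=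
  ∀ x ∈ M.U, x ∈ N.I → (∃ a', M.T a (some x) a') → ∃ b', N.W b [ELabel.lab x] b'

lemma quiescent_left {M : LTS Qs Lab} {N : LTS Qe Lab} (H : Std M N) {a : Qs} {b : Qe}
    (hh : Half M N a b) (hq : (par M N).Quiescent (a, b)) : M.Quiescent a := by
  refine ⟨fun x hx q' h => ?_, fun q' h => hq.2 (q', b) (Or.inl ⟨h, rfl⟩)⟩
  have hxL : x ∈ M.L := Or.inr hx
  by_cases hN : x ∈ N.L
  · have hI : x ∈ N.I := hN.resolve_right (H.c x hx)
    obtain ⟨b', hb⟩ := hh x hx hI ⟨q', h⟩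
    obtain ⟨b1, b2, e1, v, _⟩ := W_single.1 hb
    rcases Relation.ReflTransGen.cases_head e1 with rfl | ⟨c, hc, _⟩
    · exact hq.1 x (Or.inl hx) (q', b2) (Or.inr (Or.inr ⟨hxL, hN, h, v⟩))
    · exact hq.2 (a, c) (Or.inr ⟨hc, rfl⟩)
  · exact hq.1 x (Or.inl hx) (q', b) (Or.inl ⟨hxL, hN, h, rfl⟩)

lemma quiescent_both {M : LTS Qs Lab} {N : LTS Qe Lab} {p : Qs × Qe}
    (h1 : M.Quiescent p.1) (h2 : N.Quiescent p.2) : (par M N).Quiescent p := by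
  refine ⟨?_, ?_⟩
  · rintro x hx q' (h | h | h)
    · rcases hx with hx | hx
      · exact h1.1 x hx _ h.2.2.1
      · exact h.2.1 (Or.inr hx)
    · rcases hx with hx | hx
      · exact h.2.1 (Or.inr hx)
      · exact h2.1 x hx _ h.2.2.1
    · rcases hx with hx | hx
      · exact h1.1 x hx _ h.2.2.1
      · exact h2.1 x hx _ h.2.2.2
  · rintro q' (h | h)
    · exact h1.2 _ h.1
    · exact h2.2 _ h.1

lemma projD_snoc_in {σ : List (ELabel Lab)} {S : Set Lab} {x : ELabel Lab}
    (h : ELabel.inL S x) : projD (σ ++ [x]) S = projD σ S ++ [x] := by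
  simp [projD, h]

lemma projD_snoc_out {σ : List (ELabel Lab)} {S : Set Lab} {x : ELabel Lab}
    (h : ¬ ELabel.inL S x) : projD (σ ++ [x]) S = projD σ S := by
  simp [projD, h]

lemma par_T_left {M : LTS Qs Lab} {N : LTS Qe Lab} {p q : Qs × Qe} {l : Lab}
    (h : (par M N).T p (some l) q) (hl : l ∈ M.L) : M.T p.1 (some l) q.1 := by
  rcases h with h | h | h
  · exact h.2.2.1
  · exact absurd hl h.2.1
  · exact h.2.2.1

lemma par_T_left' {M : LTS Qs Lab} {N : LTS Qe Lab} {p q : Qs × Qe} {l : Lab}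
    (h : (par M N).T p (some l) q) (hl : l ∉ M.L) : q.1 = p.1 := by
  rcases h with h | h | h
  · exact absurd h.1 hl
  · exact h.2.2.2
  · exact absurd h.1 hl

/-- acceptance along all prefixes -/
def Good (M : LTS Qs Lab) (N : LTS Qe Lab) (σ : List (ELabel Lab)) : Prop :=
  ∀ σ1 σ2, σ = σ1 ++ σ2 → ∀ a b, (par M N).W (par M N).q0 σ1 (a, b) → Half M N a b

lemma proj_left {M : LTS Qs Lab} {N : LTS Qe Lab} (H : Std M N) {σ : List (ELabel Lab)} :
    ∀ {p}, Good M N σ → (par M N).W (par M N).q0 σ p → M.W M.q0 (projD σ M.L) p.1 := by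
  induction σ using List.reverseRecOn with
  | nil =>
    intro p _ h
    rw [W_nil, eps_par] at h
    exact W.nil h.1
  | append_singleton l x ih =>
    intro p hg h
    obtain ⟨a, b, h1, h2, h3⟩ := W_snoc.1 h
    have hh := hg l [x] rfl a.1 a.2 h1
    have ih' := ih (p := a) (fun σ1 σ2 hs => hg σ1 (σ2 ++ [x]) (by simp [hs])) h1
    have e3 := (eps_par.1 h3).1
    cases x with
    | delta =>
      rw [projD_snoc_in (by trivial)]
      obtain ⟨rfl, hq⟩ := h2
      exact W.snoc ih' ⟨rfl, quiescent_left H hh hq⟩ e3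
    | lab x =>
      by_cases hx : x ∈ M.L
      · rw [projD_snoc_in (by exact hx)]
        exact W.snoc ih' (par_T_left h2 hx) e3
      · rw [projD_snoc_out (by exact hx)]
        rw [par_T_left' h2 hx] at e3
        exact W_eps ih' e3

lemma proj_right {M : LTS Qs Lab} {N : LTS Qe Lab} (H : Std M N) {σ : List (ELabel Lab)}
    {p} (hg : Good N M σ) (h : (par M N).W (par M N).q0 σ p) :
    N.W N.q0 (projD σ N.L) p.2 :=
  proj_left H.swap hg (par_W_swap h)

lemma comb {M : LTS Qs Lab} {N : LTS Qe Lab} {σ : List (ELabel Lab)} :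
    ∀ {a b}, TraceIn (M.L ∪ N.L) σ → M.W M.q0 (projD σ M.L) a → N.W N.q0 (projD σ N.L) b →
      (par M N).W (par M N).q0 σ (a, b) := by
  induction σ using List.reverseRecOn with
  | nil =>
    intro a b _ h1 h2
    exact W.nil (eps_par.2 ⟨W_nil.1 h1, W_nil.1 h2⟩)
  | append_singleton l x ih =>
    intro a b ht h1 h2
    have ht' : TraceIn (M.L ∪ N.L) l := fun y hy => ht y (by simp [hy])
    cases x with
    | delta =>
      rw [projD_snoc_in (by trivial), W_snoc] at h1 h2
      obtain ⟨a1, _, hw1, ⟨rfl, q1⟩, e1⟩ := h1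
      obtain ⟨b1, _, hw2, ⟨rfl, q2⟩, e2⟩ := h2
      exact W.snoc (ih ht' hw1 hw2) ⟨rfl, quiescent_both q1 q2⟩ (eps_par.2 ⟨e1, e2⟩)
    | lab x =>
      have hx : x ∈ M.L ∪ N.L := ht (.lab x) (by simp)
      by_cases hM : x ∈ M.L
      · rw [projD_snoc_in (by exact hM), W_snoc] at h1
        obtain ⟨a1, a2, hw1, v1, e1⟩ := h1
        by_cases hN : x ∈ N.L
        · rw [projD_snoc_in (by exact hN), W_snoc] at h2
          obtain ⟨b1, b2, hw2, v2, e2⟩ := h2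
          exact W.snoc (q2 := (a2, b2)) (ih ht' hw1 hw2) (Or.inr (Or.inr ⟨hM, hN, v1, v2⟩))
            (eps_par.2 ⟨e1, e2⟩)
        · rw [projD_snoc_out (by exact hN)] at h2
          exact W.snoc (q2 := (a2, b)) (ih ht' hw1 h2) (Or.inl ⟨hM, hN, v1, rfl⟩)
            (eps_par.2 ⟨e1, .refl⟩)
      · have hN : x ∈ N.L := hx.resolve_left hM
        rw [projD_snoc_out (by exact hM)] at h1
        rw [projD_snoc_in (by exact hN), W_snoc] at h2
        obtain ⟨b1, b2, hw2, v2, e2⟩ := h2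
        exact W.snoc (q2 := (a, b2)) (ih ht' h1 hw2) (Or.inr (Or.inl ⟨hN, hM, v2, rfl⟩))
            (eps_par.2 ⟨.refl, e2⟩)

/-- `Accepts N M` handles outputs of `M`. -/
lemma good_of_accepts {M : LTS Qs Lab} {N : LTS Qe Lab} (h : Accepts N M)
    {σ : List (ELabel Lab)} (hσ : σ ∈ (par M N).Utraces) : Good M N σ := by
  rintro σ1 σ2 rfl a b hw x hx hI ha
  exact (h σ1 (Utraces_swap (Utraces_prefix hσ)) b a (par_W_swap hw) x ⟨hx, ha⟩ hI).2

lemma par_trace {M : LTS Qs Lab} {N : LTS Qe Lab} {σ : List (ELabel Lab)}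
    (hσ : σ ∈ (par M N).Utraces) : TraceIn (M.L ∪ N.L) σ := by
  intro x hx
  have := hσ.1 x hx
  cases x with
  | delta => trivial
  | lab l =>
    change l ∈ (par M N).L at this
    change l ∈ M.L ∪ N.L
    simp only [L, par, Set.mem_union, Set.mem_sdiff] at *
    tauto

lemma utrace_left {M : LTS Qs Lab} {N : LTS Qe Lab} (H : Std M N) (h1 : Accepts M N)
    (h2 : Accepts N M) {σ : List (ELabel Lab)} (hσ : σ ∈ (par M N).Utraces) :
    projD σ M.L ∈ M.Utraces := by
  obtain ⟨p, hp⟩ := hσ.2.1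
  refine ⟨?_, ⟨p.1, proj_left H (good_of_accepts h2 hσ) hp⟩, ?_⟩
  · intro x hx
    simpa using (List.mem_filter.1 hx).2
  · intro σ1 l σ2 he hl q hq
    obtain ⟨l1, l2, rfl, rfl, he2⟩ := List.filter_eq_append_iff.1 he
    obtain ⟨l3, l4, rfl, hl3, -, -⟩ := List.filter_eq_cons_iff.1 he2
    have hL : l ∈ M.L := Or.inl hl
    set A := l1 ++ l3 with hA
    have hσe : l1 ++ (l3 ++ ELabel.lab l :: l4) = A ++ ELabel.lab l :: l4 := by simp [hA]
    rw [hσe] at hσ hp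
    have hAu : A ∈ (par M N).Utraces := Utraces_prefix hσ
    have hq' : M.W M.q0 (projD A M.L) q := by
      have : projD l3 M.L = [] := by
        simp only [projD, List.filter_eq_nil_iff]
        exact hl3
      have h' : projD A M.L = projD l1 M.L ++ projD l3 M.L := by simp [projD, hA]
      rw [h', this, List.append_nil]
      exact hq
    obtain ⟨r, hr⟩ := W_split (A ++ [ELabel.lab l]) l4 p (by simpa using hp)
    obtain ⟨u, v, hu, huv, -⟩ := W_snoc.1 hr
    have hN := proj_right H (good_of_accepts h1 (Utraces_swap hAu)) hu
    have hc := comb (par_trace hAu) hq' hN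
    by_cases hlN : l ∈ N.U
    · have hv : N.T u.2 (some l) v.2 := par_T_left (par_T_swap huv) (Or.inr hlN)
      exact (h1 A hAu q u.2 hc l ⟨hlN, _, hv⟩ hl).2
    · obtain ⟨r', hr'⟩ := hσ.2.2 A l l4 rfl (Or.inl ⟨hl, hlN⟩) _ hc
      obtain ⟨c, d, e1, v1, e2⟩ := W_single.1 hr'
      exact ⟨r'.1, W_single.2 ⟨c.1, d.1, (eps_par.1 e1).1, par_T_left v1 hL, (eps_par.1 e2).1⟩⟩

lemma out_left {M : LTS Qs Lab} {N : LTS Qe Lab} (H : Std M N)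
    (h2 : Accepts N M) {σ : List (ELabel Lab)} (hσ : σ ∈ (par M N).Utraces)
    {a a' : Qs} {b : Qe} {l : Lab} (hl : l ∈ M.U) (ha : M.W M.q0 (projD σ M.L) a)
    (hb : N.W N.q0 (projD σ N.L) b) (ht : M.T a (some l) a') :
    ELabel.lab l ∈ (par M N).outSet ((par M N).after σ) := by
  have hM : l ∈ M.L := Or.inr hl
  simp only [outSet, Set.mem_iUnion]
  have hc := comb (par_trace hσ) ha hb
  by_cases hN : l ∈ N.L
  · have hI : l ∈ N.I := hN.resolve_right (H.c l hl)
    obtain ⟨r, hr⟩ := good_of_accepts h2 hσ σ [] (by simp) a b hc l hl hI ⟨_, ht⟩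
    obtain ⟨c, d, e1, v1, e2⟩ := W_single.1 hr
    exact ⟨(a, c), comb (par_trace hσ) ha (W_eps hb e1), Or.inl hl, (a', d),
      Or.inr (Or.inr ⟨hM, hN, ht, v1⟩)⟩
  · exact ⟨(a, b), hc, Or.inl hl, (a', b), Or.inl ⟨hM, hN, ht, rfl⟩⟩

lemma outSet_swap {M : LTS Qs Lab} {N : LTS Qe Lab} {σ : List (ELabel Lab)} {l : Lab}
    (h : ELabel.lab l ∈ (par N M).outSet ((par N M).after σ)) :
    ELabel.lab l ∈ (par M N).outSet ((par M N).after σ) := by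
  simp only [outSet, Set.mem_iUnion] at *
  obtain ⟨p, hp, hl, q, hq⟩ := h
  exact ⟨p.swap, par_W_swap hp, Or.symm hl, q.swap, par_T_swap hq⟩

end CT

/-- if `s` mutually accepts `e`, `i_s uioco s` and `i_e uioco e`,
then `i_s ∥ i_e uioco s ∥ e`. -/
theorem compositional_testing_mutually_accepts
    {Qs Qe Qis Qie Lab : Type}
    (s : LTS Qs Lab) (e : LTS Qe Lab) (iS : LTS Qis Lab) (iE : LTS Qie Lab)
    (hs : s.WellFormed) (he : e.WellFormed)
    (hiS : iS.WellFormed) (hiE : iE.WellFormed)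
    (hcomp : Composable s e)
    (hiSenabled : iS.InputEnabled) (hiEenabled : iE.InputEnabled)
    (hI1 : iS.I = s.I) (hU1 : iS.U = s.U)
    (hI2 : iE.I = e.I) (hU2 : iE.U = e.U)
    (hma : MutuallyAccepts s e)
    (huioco1 : Uioco iS s) (huioco2 : Uioco iE e) :
    Uioco (par iS iE) (par s e) := by
  classical
  have hc : ∀ l, l ∈ s.U → l ∉ e.U := fun l h1 h2 => by
    have : l ∈ s.U ∩ e.U := ⟨h1, h2⟩
    rw [hcomp] at this
    exact this
  have H : CT.Std s e := ⟨hs.2.2.2.1, he.2.2.2.1, hs.2.2.1, he.2.2.1, hc⟩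
  have Hi : CT.Std iS iE := ⟨hiS.2.2.2.1, hiE.2.2.2.1, hiS.2.2.1, hiE.2.2.1, by
    rw [hU1, hU2]; exact hc⟩
  have hL1 : iS.L = s.L := by simp [LTS.L, hI1, hU1]
  have hL2 : iE.L = e.L := by simp [LTS.L, hI2, hU2]
  obtain ⟨hse, hes⟩ := hma
  intro σ hσ x hx
  have hσ1 := CT.utrace_left H hse hes hσ
  have hσ2 := CT.utrace_left H.swap hes hse (CT.Utraces_swap hσ)
  have hx' := hx
  simp only [LTS.outSet, Set.mem_iUnion] at hx'
  obtain ⟨⟨a, b⟩, hp, hxp⟩ := hx'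
  have g1 : CT.Good iS iE σ := fun _ _ _ _ b _ y _ hy _ => hiEenabled b y hy
  have g2 : CT.Good iE iS σ := fun _ _ _ _ b _ y _ hy _ => hiSenabled b y hy
  have ha := CT.proj_left Hi g1 hp
  have hb := CT.proj_right Hi g2 hp
  rw [hL1] at ha
  rw [hL2] at hb
  have o1 : ∀ y, y ∈ iS.outq a → ∃ q, s.W s.q0 (projD σ s.L) q ∧ y ∈ s.outq q := by
    intro y hy
    have := huioco1 _ hσ1 (a := y) (by
      simp only [LTS.outSet, Set.mem_iUnion]; exact ⟨a, ha, hy⟩)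
    simp only [LTS.outSet, Set.mem_iUnion] at this
    obtain ⟨q, h1, h2⟩ := this
    exact ⟨q, h1, h2⟩
  have o2 : ∀ y, y ∈ iE.outq b → ∃ q, e.W e.q0 (projD σ e.L) q ∧ y ∈ e.outq q := by
    intro y hy
    have := huioco2 _ hσ2 (a := y) (by
      simp only [LTS.outSet, Set.mem_iUnion]; exact ⟨b, hb, hy⟩)
    simp only [LTS.outSet, Set.mem_iUnion] at this
    obtain ⟨q, h1, h2⟩ := this
    exact ⟨q, h1, h2⟩
  obtain ⟨qs, hqs⟩ := hσ1.2.1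
  obtain ⟨qe, hqe⟩ := hσ2.2.1
  cases x with
  | delta =>
    have q1 : iS.Quiescent a := CT.quiescent_left Hi (g1 σ [] (by simp) a b hp) hxp
    have q2 : iE.Quiescent b := CT.quiescent_left Hi.swap
      (g2 σ [] (by simp) b a (CT.par_W_swap hp)) (CT.par_Q_swap hxp)
    obtain ⟨q, h1, h1'⟩ := o1 .delta q1
    obtain ⟨r, h2, h2'⟩ := o2 .delta q2
    simp only [LTS.outSet, Set.mem_iUnion]
    exact ⟨(q, r), CT.comb (CT.par_trace hσ) h1 h2, CT.quiescent_both h1' h2'⟩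
  | lab l =>
    obtain ⟨hl, p', ht⟩ := hxp
    rcases hl with hl | hl
    · obtain ⟨q, h1, h1', q', h1''⟩ := o1 (.lab l) ⟨hl, p'.1, CT.par_T_left ht (Or.inr hl)⟩
      exact CT.out_left H hes hσ h1' h1 hqe h1''
    · obtain ⟨q, h1, h1', q', h1''⟩ := o2 (.lab l)
        ⟨hl, p'.2, CT.par_T_left (CT.par_T_swap ht) (Or.inr hl)⟩
      exact CT.outSet_swap (CT.out_left H.swap hse (CT.Utraces_swap hσ) h1' h1 hqs h1'')
end

section
/- Let s and e be labelled transition systems. Then s eco e if and only if R_U(s,e) is an ecosim for s and e. -/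
/-- `s eco e` iff `R_U(s,e)` is an ecosim for `s` and `e`. -/
theorem eco_iff_RU_is_ecosim {Qs Qe Lab : Type} (s : LTS Qs Lab) (e : LTS Qe Lab)
    (hs : s.WellFormed) (he : e.WellFormed) :
    Eco s e ↔ IsEcosim s e {p | RU s e p.1 p.2} := by
  constructor
  · rintro ⟨R, hb, hR⟩
    have key : ∀ Xs Xe, RU s e Xs Xe → (Xs, Xe) ∈ R := by
      intro Xs Xe h
      induction h with
      | base => exact hb
      | syncOutE ℓ _ h1 h2 ih => exact ((hR _ _ ih).1 ℓ h1 h2).2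
      | syncOutS ℓ _ h1 h2 ih => exact ((hR _ _ ih).2.1 ℓ h1 h2).2
      | internalE ℓ _ h1 h2 ih => exact (hR _ _ ih).2.2.1 ℓ h1 h2
      | internalS ℓ _ h1 h2 ih => exact (hR _ _ ih).2.2.2.1 ℓ h1 h2
      | syncIn ℓ _ h1 h2 ih => exact (hR _ _ ih).2.2.2.2.1 ℓ h1 h2
      | qdelta _ h1 h2 ih => exact (hR _ _ ih).2.2.2.2.2 h1 h2
    refine ⟨RU.base, fun Xs Xe h => ?_⟩
    have hr := hR _ _ (key Xs Xe h)
    exact ⟨fun ℓ h1 h2 => ⟨(hr.1 ℓ h1 h2).1, RU.syncOutE ℓ h h1 h2⟩,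
      fun ℓ h1 h2 => ⟨(hr.2.1 ℓ h1 h2).1, RU.syncOutS ℓ h h1 h2⟩,
      fun ℓ h1 h2 => RU.internalE ℓ h h1 h2,
      fun ℓ h1 h2 => RU.internalS ℓ h h1 h2,
      fun ℓ h1 h2 => RU.syncIn ℓ h h1 h2,
      fun h1 h2 => RU.qdelta h h1 h2⟩
  · exact fun h => ⟨_, h⟩
end

section
/- Let s and e be composable labelled transition systems. If s eco e, then s accepts e. -/
namespace LTS

theorem w_nil_iff {Q Lab : Type} (M : LTS Q Lab) (q q' : Q) : M.W q [] q' ↔ M.Eps q q' := by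
  constructor
  · intro h
    generalize hσ : ([] : List (ELabel Lab)) = σ at h
    cases h with
    | nil h => exact h
    | snoc h1 h2 h3 => simp at hσ
  · exact W.nil

theorem w_snoc_iff {Q Lab : Type} (M : LTS Q Lab) (q q' : Q) (σ : List (ELabel Lab))
    (x : ELabel Lab) :
    M.W q (σ ++ [x]) q' ↔ ∃ q1 q2, M.W q σ q1 ∧ M.VStep q1 x q2 ∧ M.Eps q2 q' := by
  constructor
  · intro h
    generalize hσ : σ ++ [x] = σ' at h
    cases h with
    | nil h => simp at hσ
    | snoc h1 h2 h3 =>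
      obtain ⟨rfl, hx⟩ := List.append_inj' hσ rfl
      simp only [List.cons.injEq, and_true] at hx
      subst hx
      exact ⟨_, _, h1, h2, h3⟩
  · rintro ⟨q1, q2, h1, h2, h3⟩
    exact W.snoc h1 h2 h3

theorem w_single_iff {Q Lab : Type} (M : LTS Q Lab) (q q' : Q) (x : ELabel Lab) :
    M.W q [x] q' ↔ ∃ q1 q2, M.Eps q q1 ∧ M.VStep q1 x q2 ∧ M.Eps q2 q' := by
  have := w_snoc_iff M q q' [] x
  simpa only [List.nil_append, w_nil_iff] using this

def TClosed {Q Lab : Type} (M : LTS Q Lab) (X : Set Q) : Prop :=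
  ∀ q ∈ X, ∀ q', M.Eps q q' → q' ∈ X

theorem mem_afterSet_iff {Q Lab : Type} (M : LTS Q Lab) {X : Set Q} (hX : M.TClosed X)
    (x : ELabel Lab) (q' : Q) :
    q' ∈ M.afterSet X [x] ↔ ∃ q1 ∈ X, ∃ q2, M.VStep q1 x q2 ∧ M.Eps q2 q' := by
  constructor
  · rintro ⟨q, hq, h⟩
    obtain ⟨q1, q2, h1, h2, h3⟩ := (w_single_iff M _ _ _).1 h
    exact ⟨q1, hX _ hq _ h1, q2, h2, h3⟩
  · rintro ⟨q1, hq, q2, h2, h3⟩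
    exact ⟨q1, hq, (w_single_iff M _ _ _).2 ⟨q1, q2, .refl, h2, h3⟩⟩

theorem tclosed_afterSet {Q Lab : Type} (M : LTS Q Lab) {X : Set Q} (hX : M.TClosed X)
    (x : ELabel Lab) : M.TClosed (M.afterSet X [x]) := by
  intro q hq q' h
  rw [mem_afterSet_iff M hX] at hq ⊢
  obtain ⟨q1, h1, q2, h2, h3⟩ := hq
  exact ⟨q1, h1, q2, h2, Relation.ReflTransGen.trans h3 h⟩

theorem eps_quiescent {Q Lab : Type} (M : LTS Q Lab) {q q' : Q} (h : M.Eps q q')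
    (hq : ∀ q', ¬ M.T q none q') : q' = q := by
  rcases Relation.ReflTransGen.cases_head h with h | ⟨c, h, _⟩
  · exact h.symm
  · exact (hq _ h).elim

end LTS

open LTS

theorem par_eps_iff {Qs Qe Lab : Type} (s : LTS Qs Lab) (e : LTS Qe Lab) (p p' : Qs × Qe) :
    (par s e).Eps p p' ↔ s.Eps p.1 p'.1 ∧ e.Eps p.2 p'.2 := by
  constructor
  · intro h
    induction h with
    | refl => exact ⟨.refl, .refl⟩
    | tail _ h ih =>
      rcases h with ⟨h, h'⟩ | ⟨h, h'⟩
      · exact ⟨ih.1.tail h, h' ▸ ih.2⟩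
      · exact ⟨h' ▸ ih.1, ih.2.tail h⟩
  · obtain ⟨a, b⟩ := p
    obtain ⟨a', b'⟩ := p'
    rintro ⟨h1, h2⟩
    simp only at h1 h2
    have k1 : (par s e).Eps (a, b) (a', b) := by
      induction h1 with
      | refl => exact .refl
      | tail _ h ih => exact Relation.ReflTransGen.tail ih (Or.inl ⟨h, rfl⟩)
    have k2 : (par s e).Eps (a', b) (a', b') := by
      clear k1
      induction h2 with
      | refl => exact .refl
      | tail _ h ih => exact Relation.ReflTransGen.tail ih (Or.inr ⟨h, rfl⟩)
    exact Relation.ReflTransGen.trans k1 k2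

theorem utrace_prefix {Q Lab : Type} (M : LTS Q Lab) (σ : List (ELabel Lab)) (x : ELabel Lab)
    (h : σ ++ [x] ∈ M.Utraces) : σ ∈ M.Utraces := by
  obtain ⟨h1, ⟨q, h2⟩, h3⟩ := h
  refine ⟨fun y hy => h1 y (by simp [hy]), ?_, ?_⟩
  · obtain ⟨q1, _, h, _⟩ := (w_snoc_iff M _ _ _ _).1 h2
    exact ⟨q1, h⟩
  · intro σ1 ℓ σ2 hσ hℓ
    exact h3 σ1 ℓ (σ2 ++ [x]) (by simp [hσ]) hℓ

theorem eco_inv {Qs Qe Lab : Type} (s : LTS Qs Lab) (e : LTS Qe Lab)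
    (hs : s.WellFormed) (he : e.WellFormed)
    (hcomp : Composable s e) (R : Set (Set Qs × Set Qe)) (hR : IsEcosim s e R)
    (σ : List (ELabel Lab)) : σ ∈ (par s e).Utraces →
    ∃ Xs Xe, (Xs, Xe) ∈ R ∧ s.TClosed Xs ∧ e.TClosed Xe ∧
      ∀ p, (par s e).W (par s e).q0 σ p ↔ p.1 ∈ Xs ∧ p.2 ∈ Xe := by
  induction σ using List.reverseRecOn with
  | nil =>
    intro _
    refine ⟨_, _, hR.1, ?_, ?_, ?_⟩
    · intro q hq q' h
      exact W.nil (Relation.ReflTransGen.trans ((w_nil_iff _ _ _).1 hq) h)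
    · intro q hq q' h
      exact W.nil (Relation.ReflTransGen.trans ((w_nil_iff _ _ _).1 hq) h)
    · intro p
      rw [w_nil_iff, par_eps_iff]
      simp only [LTS.after, Set.mem_setOf_eq, w_nil_iff]
      rfl
  | append_singleton σ x ih =>
    intro hu
    obtain ⟨Xs, Xe, hX, cs, ce, hW⟩ := ih (utrace_prefix _ _ _ hu)
    obtain ⟨hL, ⟨p', hp'⟩, hin⟩ := hu
    obtain ⟨p1, p2, hp1, hst, -⟩ := (w_snoc_iff _ _ _ _ _).1 hp'
    rw [hW] at hp1
    obtain ⟨ra, rb, rc, rd, re, rf⟩ := hR.2 Xs Xe hX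
    have hds : ∀ ℓ, ℓ ∈ s.I → ℓ ∉ s.U := fun ℓ h h' => Set.disjoint_left.1 hs.2.2.1 h h'
    have hde : ∀ ℓ, ℓ ∈ e.I → ℓ ∉ e.U := fun ℓ h h' => Set.disjoint_left.1 he.2.2.1 h h'
    have hUU : ∀ ℓ, ℓ ∈ s.U → ℓ ∉ e.U := fun ℓ h h' => by
      have : ℓ ∈ s.U ∩ e.U := ⟨h, h'⟩
      rw [hcomp] at this
      exact this
    have outs : ∀ ℓ q q', q ∈ Xs → ℓ ∈ s.U → s.T q (some ℓ) q' →
        ELabel.lab ℓ ∈ s.outSet Xs := fun ℓ q q' h1 h2 h3 =>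
      Set.mem_biUnion h1 (show s.outLabel q (ELabel.lab ℓ) from ⟨h2, q', h3⟩)
    have oute : ∀ ℓ q q', q ∈ Xe → ℓ ∈ e.U → e.T q (some ℓ) q' →
        ELabel.lab ℓ ∈ e.outSet Xe := fun ℓ q q' h1 h2 h3 =>
      Set.mem_biUnion h1 (show e.outLabel q (ELabel.lab ℓ) from ⟨h2, q', h3⟩)
    cases x with
    | delta =>
      have key : ∀ q, q.1 ∈ Xs → q.2 ∈ Xe →
          ((par s e).Quiescent q ↔ s.Quiescent q.1 ∧ e.Quiescent q.2) := by
        rintro ⟨a, b⟩ ha hb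
        simp only at ha hb ⊢
        constructor
        · rintro ⟨h1, h2⟩
          have ta : ∀ q', ¬ s.T a none q' := fun q' h => h2 (q', b) (Or.inl ⟨h, rfl⟩)
          have tb : ∀ q', ¬ e.T b none q' := fun q' h => h2 (a, q') (Or.inr ⟨h, rfl⟩)
          refine ⟨⟨fun ℓ hℓ q' h => ?_, ta⟩, ⟨fun ℓ hℓ q' h => ?_, tb⟩⟩
          · by_cases hI : ℓ ∈ e.I
            · have := (rb ℓ (outs ℓ a q' ha hℓ h) hI).1
              obtain ⟨-, q'', hw⟩ := Set.mem_iInter₂.1 this b hb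
              obtain ⟨b1, b2, e1, e2, -⟩ := (w_single_iff _ _ _ _).1 hw
              obtain rfl := eps_quiescent e e1 tb
              exact h1 ℓ (Or.inl hℓ) (q', b2) (Or.inr (Or.inr ⟨Or.inr hℓ, Or.inl hI, h, e2⟩))
            · exact h1 ℓ (Or.inl hℓ) (q', b)
                (Or.inl ⟨Or.inr hℓ, fun h => h.elim hI (hUU _ hℓ), h, rfl⟩)
          · by_cases hI : ℓ ∈ s.I
            · have := (ra ℓ (oute ℓ b q' hb hℓ h) hI).1
              obtain ⟨-, q'', hw⟩ := Set.mem_iInter₂.1 this a ha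
              obtain ⟨b1, b2, e1, e2, -⟩ := (w_single_iff _ _ _ _).1 hw
              obtain rfl := eps_quiescent s e1 ta
              exact h1 ℓ (Or.inr hℓ) (b2, q') (Or.inr (Or.inr ⟨Or.inl hI, Or.inr hℓ, e2, h⟩))
            · exact h1 ℓ (Or.inr hℓ) (a, q')
                (Or.inr (Or.inl ⟨Or.inr hℓ, fun h => h.elim hI (fun h => hUU _ h hℓ), h, rfl⟩))
        · rintro ⟨⟨h1, h2⟩, ⟨h3, h4⟩⟩
          refine ⟨?_, ?_⟩
          · rintro ℓ (hℓ | hℓ) q' (⟨k1, k2, k3, k4⟩ | ⟨k1, k2, k3, k4⟩ | ⟨k1, k2, k3, k4⟩)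
            · exact h1 _ hℓ _ k3
            · exact k2 (Or.inr hℓ)
            · exact h1 _ hℓ _ k3
            · exact k2 (Or.inr hℓ)
            · exact h3 _ hℓ _ k3
            · exact h3 _ hℓ _ k4
          · rintro q' (⟨k, -⟩ | ⟨k, -⟩)
            · exact h2 _ k
            · exact h4 _ k
      have hq := (key p1 hp1.1 hp1.2).1 hst.2
      refine ⟨_, _, rf (Set.mem_biUnion hp1.1 hq.1) (Set.mem_biUnion hp1.2 hq.2),
        tclosed_afterSet s cs _, tclosed_afterSet e ce _, ?_⟩
      intro p
      rw [w_snoc_iff, mem_afterSet_iff s cs, mem_afterSet_iff e ce]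
      constructor
      · rintro ⟨q1, q2, h1, ⟨rfl, h2⟩, h3⟩
        rw [hW] at h1
        rw [par_eps_iff] at h3
        have hk := (key _ h1.1 h1.2).1 h2
        exact ⟨⟨_, h1.1, _, ⟨rfl, hk.1⟩, h3.1⟩, ⟨_, h1.2, _, ⟨rfl, hk.2⟩, h3.2⟩⟩
      · rintro ⟨⟨a, ha, _, ⟨rfl, hqa⟩, h3⟩, ⟨b, hb, _, ⟨rfl, hqb⟩, h4⟩⟩
        exact ⟨(_, _), (_, _), (hW _).2 ⟨ha, hb⟩, ⟨rfl, (key (_, _) ha hb).2 ⟨hqa, hqb⟩⟩,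
          (par_eps_iff _ _ _ _).2 ⟨h3, h4⟩⟩
    | lab ℓ =>
      have hw : ℓ ∈ (par s e).I → ∀ a ∈ Xs, ∀ b ∈ Xe, ∃ q1 q2 : Qs × Qe, s.Eps a q1.1 ∧
          e.Eps b q1.2 ∧ (par s e).T q1 (some ℓ) q2 := by
        intro hI a ha b hb
        obtain ⟨q', h⟩ := hin σ ℓ [] rfl hI (a, b) ((hW _).2 ⟨ha, hb⟩)
        obtain ⟨q1, q2, h1, h2, -⟩ := (w_single_iff _ _ _ _).1 h
        rw [par_eps_iff] at h1
        exact ⟨q1, q2, h1.1, h1.2, h2⟩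
      have hws : ∀ a q1 q2, s.Eps a q1 → s.T q1 (some ℓ) q2 → ∃ q', s.W a [ELabel.lab ℓ] q' :=
        fun a q1 q2 h1 h2 => ⟨q2, (w_single_iff _ _ _ _).2 ⟨q1, q2, h1, h2, .refl⟩⟩
      have hwe : ∀ a q1 q2, e.Eps a q1 → e.T q1 (some ℓ) q2 → ∃ q', e.W a [ELabel.lab ℓ] q' :=
        fun a q1 q2 h1 h2 => ⟨q2, (w_single_iff _ _ _ _).2 ⟨q1, q2, h1, h2, .refl⟩⟩
      rcases hst with ⟨k1, k2, k3, -⟩ | ⟨k1, k2, k3, -⟩ | ⟨k1, k2, k3, k4⟩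
      · refine ⟨_, _, rd ℓ ?_ k2, tclosed_afterSet s cs _, ce, ?_⟩
        · rcases k1 with hI | hU
          · right
            refine Set.mem_iInter₂.2 fun a ha => ⟨hI, ?_⟩
            obtain ⟨q1, q2, h1, h2, h3⟩ :=
              hw (Or.inl ⟨hI, fun h => k2 (Or.inr h)⟩) a ha p1.2 hp1.2
            rcases h3 with h | h | h
            · exact hws _ _ _ h1 h.2.2.1
            · exact (k2 h.1).elim
            · exact (k2 h.2.1).elim
          · exact Or.inl (outs _ _ _ hp1.1 hU k3)
        · intro p
          rw [w_snoc_iff, mem_afterSet_iff s cs]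
          constructor
          · rintro ⟨q1, q2, h1, h2, h3⟩
            rw [hW] at h1
            rw [par_eps_iff] at h3
            rcases h2 with h | h | h
            · exact ⟨⟨_, h1.1, _, h.2.2.1, h3.1⟩, ce _ h1.2 _ (h.2.2.2 ▸ h3.2)⟩
            · exact (k2 h.1).elim
            · exact (k2 h.2.1).elim
          · rintro ⟨⟨a, ha, a', h1, h2⟩, hb⟩
            exact ⟨(a, p.2), (a', p.2), (hW _).2 ⟨ha, hb⟩, Or.inl ⟨k1, k2, h1, rfl⟩,
              (par_eps_iff _ _ _ _).2 ⟨h2, .refl⟩⟩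
      · refine ⟨_, _, rc ℓ ?_ k2, cs, tclosed_afterSet e ce _, ?_⟩
        · rcases k1 with hI | hU
          · right
            refine Set.mem_iInter₂.2 fun b hb => ⟨hI, ?_⟩
            obtain ⟨q1, q2, h1, h2, h3⟩ :=
              hw (Or.inr ⟨hI, fun h => k2 (Or.inr h)⟩) p1.1 hp1.1 b hb
            rcases h3 with h | h | h
            · exact (k2 h.1).elim
            · exact hwe _ _ _ h2 h.2.2.1
            · exact (k2 h.1).elim
          · exact Or.inl (oute _ _ _ hp1.2 hU k3)
        · intro p
          rw [w_snoc_iff, mem_afterSet_iff e ce]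
          constructor
          · rintro ⟨q1, q2, h1, h2, h3⟩
            rw [hW] at h1
            rw [par_eps_iff] at h3
            rcases h2 with h | h | h
            · exact (k2 h.1).elim
            · exact ⟨cs _ h1.1 _ (h.2.2.2 ▸ h3.1), ⟨_, h1.2, _, h.2.2.1, h3.2⟩⟩
            · exact (k2 h.1).elim
          · rintro ⟨ha, ⟨b, hb, b', h1, h2⟩⟩
            exact ⟨(p.1, b), (p.1, b'), (hW _).2 ⟨ha, hb⟩, Or.inr (Or.inl ⟨k1, k2, h1, rfl⟩),
              (par_eps_iff _ _ _ _).2 ⟨.refl, h2⟩⟩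
      · refine ⟨s.afterSet Xs [ELabel.lab ℓ], e.afterSet Xe [ELabel.lab ℓ], ?_,
          tclosed_afterSet s cs _, tclosed_afterSet e ce _, ?_⟩
        · have k1' := k1
          have k2' := k2
          rcases k1 with sI | sU
          · rcases k2 with eI | eU
            · have hI : ℓ ∈ (par s e).I := Or.inl ⟨sI, hde _ eI⟩
              refine re ℓ (Set.mem_iInter₂.2 fun a ha => ⟨sI, ?_⟩)
                (Set.mem_iInter₂.2 fun b hb => ⟨eI, ?_⟩)
              · obtain ⟨q1, q2, h1, h2, h3⟩ := hw hI a ha p1.2 hp1.2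
                rcases h3 with h | h | h
                · exact (h.2.1 k2').elim
                · exact (h.2.1 k1').elim
                · exact hws _ _ _ h1 h.2.2.1
              · obtain ⟨q1, q2, h1, h2, h3⟩ := hw hI p1.1 hp1.1 b hb
                rcases h3 with h | h | h
                · exact (h.2.1 k2').elim
                · exact (h.2.1 k1').elim
                · exact hwe _ _ _ h2 h.2.2.2
            · exact (ra ℓ (oute _ _ _ hp1.2 eU k4) sI).2
          · rcases k2 with eI | eU
            · exact (rb ℓ (outs _ _ _ hp1.1 sU k3) eI).2
            · exact (hUU _ sU eU).elim
        · intro p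
          rw [w_snoc_iff, mem_afterSet_iff s cs, mem_afterSet_iff e ce]
          constructor
          · rintro ⟨q1, q2, h1, h2, h3⟩
            rw [hW] at h1
            rw [par_eps_iff] at h3
            rcases h2 with h | h | h
            · exact (h.2.1 k2).elim
            · exact (h.2.1 k1).elim
            · exact ⟨⟨_, h1.1, _, h.2.2.1, h3.1⟩, ⟨_, h1.2, _, h.2.2.2, h3.2⟩⟩
          · rintro ⟨⟨a, ha, a', h1, h2⟩, ⟨b, hb, b', h3, h4⟩⟩
            exact ⟨(a, b), (a', b'), (hW _).2 ⟨ha, hb⟩, Or.inr (Or.inr ⟨k1, k2, h1, h3⟩),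
              (par_eps_iff _ _ _ _).2 ⟨h2, h4⟩⟩

/-- for composable `s`, `e`, `s eco e` implies `s accepts e`. -/
theorem eco_implies_accepts {Qs Qe Lab : Type} (s : LTS Qs Lab) (e : LTS Qe Lab)
    (hs : s.WellFormed) (he : e.WellFormed)
    (hcomp : Composable s e) (heco : Eco s e) :
    Accepts s e := by
  obtain ⟨R, hR⟩ := heco
  intro σ hσ qs qe hw ℓ hout hI
  obtain ⟨Xs, Xe, hX, -, -, hW⟩ := eco_inv s e hs he hcomp R hR σ hσ
  have hm := (hW _).1 hw
  exact Set.mem_iInter₂.1 ((hR.2 Xs Xe hX).1 ℓ (Set.mem_biUnion hm.2 hout) hI).1 qs hm.1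
end

section
/- Let s and e be composable labelled transition systems. If s eco e, then s mutually accepts e. -/
namespace EcoProof

open LTS

theorem W_snoc_iff {Q Lab : Type} (M : LTS Q Lab) (q q' : Q) (σ : List (ELabel Lab))
    (x : ELabel Lab) :
    M.W q (σ ++ [x]) q' ↔ ∃ q1 q2, M.W q σ q1 ∧ M.VStep q1 x q2 ∧ M.Eps q2 q' := by
  constructor
  · intro h
    generalize hτ : σ ++ [x] = τ at h
    cases h with
    | nil h => simp at hτ
    | snoc h1 h2 h3 =>
      have h := List.append_inj' hτ rfl
      obtain ⟨rfl, h'⟩ := h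
      simp only [List.cons.injEq, and_true] at h'
      subst h'
      exact ⟨_, _, h1, h2, h3⟩
  · rintro ⟨q1, q2, h1, h2, h3⟩
    exact W.snoc h1 h2 h3

theorem W_nil_iff {Q Lab : Type} (M : LTS Q Lab) (q q' : Q) :
    M.W q [] q' ↔ M.Eps q q' := by
  constructor
  · intro h
    generalize hτ : ([] : List (ELabel Lab)) = τ at h
    cases h with
    | nil h => exact h
    | snoc h1 h2 h3 => simp at hτ
  · exact W.nil

theorem W_one_iff {Q Lab : Type} (M : LTS Q Lab) (q q' : Q) (x : ELabel Lab) :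
    M.W q [x] q' ↔ ∃ q1 q2, M.Eps q q1 ∧ M.VStep q1 x q2 ∧ M.Eps q2 q' := by
  have := W_snoc_iff M q q' [] x
  simpa [W_nil_iff] using this

def TC {Q Lab : Type} (M : LTS Q Lab) (X : Set Q) : Prop :=
  ∀ a ∈ X, ∀ b, M.Eps a b → b ∈ X

theorem mem_afterSet {Q Lab : Type} (M : LTS Q Lab) {X : Set Q} (hX : TC M X)
    (x : ELabel Lab) (q' : Q) :
    q' ∈ M.afterSet X [x] ↔ ∃ q1 ∈ X, ∃ q2, M.VStep q1 x q2 ∧ M.Eps q2 q' := by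
  simp only [afterSet, Set.mem_ofPred_eq, W_one_iff]
  constructor
  · rintro ⟨q, hq, q1, q2, h1, h2, h3⟩
    exact ⟨q1, hX q hq _ h1, q2, h2, h3⟩
  · rintro ⟨q1, hq, q2, h2, h3⟩
    exact ⟨q1, hq, q1, q2, Relation.ReflTransGen.refl, h2, h3⟩

theorem TC_afterSet {Q Lab : Type} (M : LTS Q Lab) {X : Set Q} (hX : TC M X)
    (x : ELabel Lab) : TC M (M.afterSet X [x]) := by
  intro a ha b hab
  rw [mem_afterSet M hX] at ha ⊢
  obtain ⟨q1, h1, q2, h2, h3⟩ := ha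
  exact ⟨q1, h1, q2, h2, h3.trans hab⟩

section
variable {Qs Qe Lab : Type} (s : LTS Qs Lab) (e : LTS Qe Lab)

theorem par_eps (p p' : Qs × Qe) :
    (par s e).Eps p p' ↔ s.Eps p.1 p'.1 ∧ e.Eps p.2 p'.2 := by
  constructor
  · intro h
    induction h with
    | refl => exact ⟨Relation.ReflTransGen.refl, Relation.ReflTransGen.refl⟩
    | tail _ h ih =>
      rcases h with ⟨h, h'⟩ | ⟨h, h'⟩
      · exact ⟨ih.1.tail h, h' ▸ ih.2⟩
      · exact ⟨h' ▸ ih.1, ih.2.tail h⟩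
  · obtain ⟨a, b⟩ := p
    obtain ⟨a', b'⟩ := p'
    rintro ⟨h1, h2⟩
    have k1 : (par s e).Eps (a, b) (a', b) := by
      simp only at h1
      clear h2
      induction h1 with
      | refl => exact Relation.ReflTransGen.refl
      | tail _ h ih => exact ih.tail (Or.inl ⟨h, rfl⟩)
    refine k1.trans ?_
    simp only at h2
    clear k1 h1
    induction h2 with
    | refl => exact Relation.ReflTransGen.refl
    | tail _ h ih => exact ih.tail (Or.inr ⟨h, rfl⟩)

theorem mem_outSet {Q : Type} (M : LTS Q Lab) (X : Set Q) (x : ELabel Lab) :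
    x ∈ M.outSet X ↔ ∃ q ∈ X, M.outLabel q x := by
  simp [outSet, outq]

theorem mem_inSet {Q : Type} (M : LTS Q Lab) (X : Set Q) (x : Lab) :
    x ∈ M.inSet X ↔ ∀ q ∈ X, x ∈ M.I ∧ ∃ q', M.W q [ELabel.lab x] q' := by
  simp [inSet, inq]

theorem quiet_strong {Q : Type} (M : LTS Q Lab) (q q' : Q) (ℓ : Lab)
    (hq : ∀ q', ¬ M.T q none q') (h : M.W q [ELabel.lab ℓ] q') :
    ∃ q2, M.T q (some ℓ) q2 := by
  rw [W_one_iff] at h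
  obtain ⟨q1, q2, h1, h2, -⟩ := h
  rcases Relation.ReflTransGen.cases_head h1 with rfl | ⟨c, hc, -⟩
  · exact ⟨q2, h2⟩
  · exact absurd hc (hq c)

theorem key (hcomp : Composable s e) (hs : Disjoint s.I s.U) (he : Disjoint e.I e.U)
    (R : Set (Set Qs × Set Qe)) (hR : IsEcosim s e R)
    (σ : List (ELabel Lab)) : σ ∈ (par s e).Utraces →
    ∃ A B, (A, B) ∈ R ∧ TC s A ∧ TC e B ∧
      ∀ a b, (par s e).W (par s e).q0 σ (a, b) ↔ a ∈ A ∧ b ∈ B := by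
  have hc : ∀ x, x ∈ s.U → x ∈ e.U → False := fun x h1 h2 => by
    have : x ∈ s.U ∩ e.U := ⟨h1, h2⟩
    rw [hcomp] at this; exact this
  have hs' : ∀ x, x ∈ s.I → x ∈ s.U → False := fun x h1 h2 => Set.disjoint_left.1 hs h1 h2
  have he' : ∀ x, x ∈ e.I → x ∈ e.U → False := fun x h1 h2 => Set.disjoint_left.1 he h1 h2
  induction σ using List.reverseRecOn with
  | nil =>
    intro _
    refine ⟨_, _, hR.1, ?_, ?_, ?_⟩
    · intro a ha b hab
      simp only [after, Set.mem_ofPred_eq, W_nil_iff] at ha ⊢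
      exact ha.trans hab
    · intro a ha b hab
      simp only [after, Set.mem_ofPred_eq, W_nil_iff] at ha ⊢
      exact ha.trans hab
    · intro a b
      simp only [after, Set.mem_ofPred_eq, W_nil_iff, par_eps]
      rfl
  | append_singleton σ x ih =>
    rintro ⟨hT, ⟨⟨f1, f2⟩, hf⟩, hU⟩
    rw [W_snoc_iff] at hf
    obtain ⟨⟨a0, b0⟩, ⟨a1, b1⟩, hw, hv, -⟩ := hf
    obtain ⟨A, B, hAB, hA, hB, hW⟩ := ih ⟨fun y hy => hT y (by simp [hy]), ⟨_, hw⟩, by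
      intro σ1 ℓ σ2 h1
      exact hU σ1 ℓ (σ2 ++ [x]) (by simp [h1])⟩
    obtain ⟨ha0, hb0⟩ := (hW _ _).1 hw
    obtain ⟨r1, r2, r3, r4, r5, r6⟩ := hR.2 A B hAB
    cases x with
    | delta =>
      have hq : ∀ a ∈ A, ∀ b ∈ B,
          ((par s e).Quiescent (a, b) ↔ s.Quiescent a ∧ e.Quiescent b) := by
        intro a ha b hb
        constructor
        · rintro ⟨q1, q2⟩
          have ta : ∀ q', ¬ s.T a none q' := fun q' h => q2 (q', b) (Or.inl ⟨h, rfl⟩)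
          have tb : ∀ q', ¬ e.T b none q' := fun q' h => q2 (a, q') (Or.inr ⟨h, rfl⟩)
          refine ⟨⟨fun y hy q' h => ?_, ta⟩, ⟨fun y hy q' h => ?_, tb⟩⟩
          · by_cases hye : y ∈ e.L
            · have hyI : y ∈ e.I := hye.resolve_right (hc y hy)
              have := (r2 y ((mem_outSet _ _ _).2 ⟨a, ha, hy, q', h⟩) hyI).1
              obtain ⟨-, b', hb'⟩ := (mem_inSet _ _ _).1 this b hb
              obtain ⟨b2, hb2⟩ := quiet_strong e _ _ _ tb hb'
              exact q1 y (Or.inl hy) (q', b2) (Or.inr (Or.inr ⟨Or.inr hy, hye, h, hb2⟩))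
            · exact q1 y (Or.inl hy) (q', b) (Or.inl ⟨Or.inr hy, hye, h, rfl⟩)
          · by_cases hye : y ∈ s.L
            · have hyI : y ∈ s.I := hye.resolve_right (fun h => hc y h hy)
              have := (r1 y ((mem_outSet _ _ _).2 ⟨b, hb, hy, q', h⟩) hyI).1
              obtain ⟨-, b', hb'⟩ := (mem_inSet _ _ _).1 this a ha
              obtain ⟨b2, hb2⟩ := quiet_strong s _ _ _ ta hb'
              exact q1 y (Or.inr hy) (b2, q') (Or.inr (Or.inr ⟨hye, Or.inr hy, hb2, h⟩))
            · exact q1 y (Or.inr hy) (a, q') (Or.inr (Or.inl ⟨Or.inr hy, hye, h, rfl⟩))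
        · rintro ⟨⟨p1, p2⟩, ⟨p3, p4⟩⟩
          refine ⟨fun y hy q' h => ?_, fun q' h => ?_⟩
          · rcases hy with hy | hy
            · rcases h with ⟨_, _, h, _⟩ | ⟨_, h, _⟩ | ⟨_, _, h, _⟩
              · exact p1 y hy _ h
              · exact h (Or.inr hy)
              · exact p1 y hy _ h
            · rcases h with ⟨_, h, _, _⟩ | ⟨_, _, h, _⟩ | ⟨_, _, _, h⟩
              · exact h (Or.inr hy)
              · exact p3 y hy _ h
              · exact p3 y hy _ h
          · rcases h with ⟨h, _⟩ | ⟨h, _⟩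
            · exact p2 _ h
            · exact p4 _ h
      obtain ⟨qa, qb⟩ := (hq _ ha0 _ hb0).1 hv.2
      refine ⟨_, _, r6 ((mem_outSet _ _ _).2 ⟨a0, ha0, qa⟩) ((mem_outSet _ _ _).2 ⟨b0, hb0, qb⟩),
        TC_afterSet s hA _, TC_afterSet e hB _, ?_⟩
      intro a b
      rw [W_snoc_iff, mem_afterSet s hA, mem_afterSet e hB]
      constructor
      · rintro ⟨⟨c, d⟩, p, h1, ⟨rfl, h2⟩, h3⟩
        obtain ⟨hc1, hd1⟩ := (hW _ _).1 h1
        obtain ⟨k1, k2⟩ := (hq _ hc1 _ hd1).1 h2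
        rw [par_eps] at h3
        exact ⟨⟨c, hc1, c, ⟨rfl, k1⟩, h3.1⟩, ⟨d, hd1, d, ⟨rfl, k2⟩, h3.2⟩⟩
      · rintro ⟨⟨c, hc1, _, ⟨rfl, k1⟩, h3⟩, ⟨d, hd1, _, ⟨rfl, k2⟩, h4⟩⟩
        exact ⟨(_, _), (_, _), (hW _ _).2 ⟨hc1, hd1⟩, ⟨rfl, (hq _ hc1 _ hd1).2 ⟨k1, k2⟩⟩,
          (par_eps _ _ _ _).2 ⟨h3, h4⟩⟩
    | lab ℓ =>
      have hin : ℓ ∈ (par s e).I → ∀ a ∈ A, ∀ b ∈ B, ∃ p p', s.Eps a p.1 ∧ e.Eps b p.2 ∧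
          (par s e).T p (some ℓ) p' := by
        intro hI a ha b hb
        obtain ⟨q', h⟩ := hU σ ℓ [] rfl hI (a, b) ((hW _ _).2 ⟨ha, hb⟩)
        rw [W_one_iff] at h
        obtain ⟨p, p', h1, h2, h3⟩ := h
        rw [par_eps] at h1
        exact ⟨p, p', h1.1, h1.2, h2⟩
      have mk : ∀ {Q : Type} (M : LTS Q Lab) (a b c : Q), M.Eps a b → M.T b (some ℓ) c →
          ∃ q', M.W a [ELabel.lab ℓ] q' := fun M a b c h1 h2 =>
        ⟨c, (W_one_iff _ _ _ _).2 ⟨b, c, h1, h2, Relation.ReflTransGen.refl⟩⟩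
      rcases hv with ⟨l1, l2, t, -⟩ | ⟨l1, l2, t, -⟩ | ⟨l1, l2, t, t'⟩
      · refine ⟨_, _, r4 ℓ ?_ l2, TC_afterSet s hA _, hB, ?_⟩
        · rcases l1 with l1 | l1
          · right
            rw [mem_inSet]
            intro a ha
            refine ⟨l1, ?_⟩
            obtain ⟨p, p', h1, h2, h3⟩ := hin (Or.inl ⟨l1, fun h => l2 (Or.inr h)⟩) a ha b0 hb0
            rcases h3 with ⟨_, _, h, _⟩ | ⟨h, _⟩ | ⟨_, h, _⟩
            · exact mk s _ _ _ h1 h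
            · exact absurd h l2
            · exact absurd h l2
          · left
            exact (mem_outSet _ _ _).2 ⟨a0, ha0, l1, _, t⟩
        · intro a b
          rw [W_snoc_iff, mem_afterSet s hA]
          constructor
          · rintro ⟨⟨c, d⟩, p, h1, h2, h3⟩
            obtain ⟨hc1, hd1⟩ := (hW _ _).1 h1
            rw [par_eps] at h3
            rcases h2 with ⟨_, _, h, h'⟩ | ⟨h, _⟩ | ⟨_, h, _⟩
            · exact ⟨⟨c, hc1, _, h, h3.1⟩, hB d hd1 _ (by have := h3.2; rw [h'] at this; exact this)⟩
            · exact absurd h l2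
            · exact absurd h l2
          · rintro ⟨⟨c, hc1, c', k1, h3⟩, hb⟩
            exact ⟨(c, b), (c', b), (hW _ _).2 ⟨hc1, hb⟩, Or.inl ⟨l1, l2, k1, rfl⟩,
              (par_eps _ _ _ _).2 ⟨h3, Relation.ReflTransGen.refl⟩⟩
      · refine ⟨_, _, r3 ℓ ?_ l2, hA, TC_afterSet e hB _, ?_⟩
        · rcases l1 with l1 | l1
          · right
            rw [mem_inSet]
            intro b hb
            refine ⟨l1, ?_⟩
            obtain ⟨p, p', h1, h2, h3⟩ := hin (Or.inr ⟨l1, fun h => l2 (Or.inr h)⟩) a0 ha0 b hb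
            rcases h3 with ⟨h, _⟩ | ⟨_, _, h, _⟩ | ⟨h, _⟩
            · exact absurd h l2
            · exact mk e _ _ _ h2 h
            · exact absurd h l2
          · left
            exact (mem_outSet _ _ _).2 ⟨b0, hb0, l1, _, t⟩
        · intro a b
          rw [W_snoc_iff, mem_afterSet e hB]
          constructor
          · rintro ⟨⟨c, d⟩, p, h1, h2, h3⟩
            obtain ⟨hc1, hd1⟩ := (hW _ _).1 h1
            rw [par_eps] at h3
            rcases h2 with ⟨h, _⟩ | ⟨_, _, h, h'⟩ | ⟨h, _⟩
            · exact absurd h l2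
            · exact ⟨hA c hc1 _ (by have := h3.1; rw [h'] at this; exact this), ⟨d, hd1, _, h, h3.2⟩⟩
            · exact absurd h l2
          · rintro ⟨ha, ⟨c, hc1, c', k1, h3⟩⟩
            exact ⟨(a, c), (a, c'), (hW _ _).2 ⟨ha, hc1⟩, Or.inr (Or.inl ⟨l1, l2, k1, rfl⟩),
              (par_eps _ _ _ _).2 ⟨Relation.ReflTransGen.refl, h3⟩⟩
      · refine ⟨s.afterSet A [ELabel.lab ℓ], e.afterSet B [ELabel.lab ℓ], ?_,
          TC_afterSet s hA _, TC_afterSet e hB _, ?_⟩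
        · have oa : ℓ ∈ s.U → ELabel.lab ℓ ∈ s.outSet A := fun h =>
            (mem_outSet _ _ _).2 ⟨a0, ha0, h, _, t⟩
          have ob : ℓ ∈ e.U → ELabel.lab ℓ ∈ e.outSet B := fun h =>
            (mem_outSet _ _ _).2 ⟨b0, hb0, h, _, t'⟩
          rcases l1 with m1 | m1
          · rcases l2 with m2 | m2
            · have hI : ℓ ∈ (par s e).I := Or.inl ⟨m1, he' _ m2⟩
              have hboth : ∀ a ∈ A, ∀ b ∈ B, (∃ q', s.W a [ELabel.lab ℓ] q') ∧
                  (∃ q', e.W b [ELabel.lab ℓ] q') := by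
                intro a ha b hb
                obtain ⟨p, p', h1, h2, h3⟩ := hin hI a ha b hb
                rcases h3 with ⟨_, h, _⟩ | ⟨_, h, _⟩ | ⟨_, _, h, h'⟩
                · exact absurd (Or.inl m2) h
                · exact absurd (Or.inl m1) h
                · exact ⟨mk s _ _ _ h1 h, mk e _ _ _ h2 h'⟩
              apply r5
              · rw [mem_inSet]; exact fun a ha => ⟨m1, (hboth a ha b0 hb0).1⟩
              · rw [mem_inSet]; exact fun b hb => ⟨m2, (hboth a0 ha0 b hb).2⟩
            · exact (r1 ℓ (ob m2) m1).2
          · have m2 : ℓ ∈ e.I := l2.resolve_right (hc _ m1)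
            exact (r2 ℓ (oa m1) m2).2
        · intro a b
          rw [W_snoc_iff, mem_afterSet s hA, mem_afterSet e hB]
          constructor
          · rintro ⟨⟨c, d⟩, p, h1, h2, h3⟩
            obtain ⟨hc1, hd1⟩ := (hW _ _).1 h1
            rw [par_eps] at h3
            rcases h2 with ⟨_, h, _⟩ | ⟨_, h, _⟩ | ⟨_, _, h, h'⟩
            · exact absurd l2 h
            · exact absurd l1 h
            · exact ⟨⟨c, hc1, _, h, h3.1⟩, ⟨d, hd1, _, h', h3.2⟩⟩
          · rintro ⟨⟨c, hc1, c', k1, h3⟩, ⟨d, hd1, d', k2, h4⟩⟩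
            exact ⟨(c, d), (c', d'), (hW _ _).2 ⟨hc1, hd1⟩, Or.inr (Or.inr ⟨l1, l2, k1, k2⟩),
              (par_eps _ _ _ _).2 ⟨h3, h4⟩⟩

theorem eco_accepts (hs : s.WellFormed) (he : e.WellFormed)
    (hcomp : Composable s e) (heco : Eco s e) : Accepts s e := by
  obtain ⟨R, hR⟩ := heco
  intro σ hσ qs qe hw ℓ hl hI
  obtain ⟨A, B, hAB, hA, hB, hW⟩ := key s e hcomp hs.2.2.1 he.2.2.1 R hR σ hσ
  obtain ⟨ha, hb⟩ := (hW _ _).1 hw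
  have := ((hR.2 A B hAB).1 ℓ ((mem_outSet _ _ _).2 ⟨qe, hb, hl⟩) hI).1
  exact (mem_inSet _ _ _).1 this qs ha

theorem eco_symm (heco : Eco s e) : Eco e s := by
  obtain ⟨R, h0, hR⟩ := heco
  refine ⟨{p | (p.2, p.1) ∈ R}, h0, ?_⟩
  intro Xe Xs h
  obtain ⟨r1, r2, r3, r4, r5, r6⟩ := hR Xs Xe h
  exact ⟨r2, r1, r4, r3, fun ℓ a b => r5 ℓ b a, fun a b => r6 b a⟩

end

end EcoProof

/-- for composable `s`, `e`, `s eco e` implies that `s` mutually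
accepts `e`. -/
theorem eco_implies_mutually_accepts {Qs Qe Lab : Type}
    (s : LTS Qs Lab) (e : LTS Qe Lab)
    (hs : s.WellFormed) (he : e.WellFormed)
    (hcomp : Composable s e) (heco : Eco s e) :
    MutuallyAccepts s e := by
  exact ⟨EcoProof.eco_accepts s e hs he hcomp heco,
    EcoProof.eco_accepts e s he hs (by rw [Composable, Set.inter_comm]; exact hcomp)
      (EcoProof.eco_symm s e heco)⟩
end

section
/- Let s and e be composable labelled transition systems and let i_s, i_e be input-enabled transition systems with I_{i_s} = I_s, U_{i_s} = U_s, I_{i_e} = I_e and U_{i_e} = U_e. If s eco e, i_s uioco s and i_e uioco e, then i_s ∥ i_e uioco s ∥ e. -/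
namespace LTS

variable {Q Lab : Type}

theorem W_nil_iff {M : LTS Q Lab} {q q' : Q} : M.W q [] q' ↔ M.Eps q q' := by
  constructor
  · intro h
    generalize hs : ([] : List (ELabel Lab)) = σ at h
    cases h with
    | nil h => exact h
    | snoc _ _ _ => simp at hs
  · exact W.nil

theorem W_snoc_iff {M : LTS Q Lab} {q q' : Q} {σ : List (ELabel Lab)} {x : ELabel Lab} :
    M.W q (σ ++ [x]) q' ↔ ∃ q1 q2, M.W q σ q1 ∧ M.VStep q1 x q2 ∧ M.Eps q2 q' := by
  constructor
  · intro h
    generalize hs : σ ++ [x] = ρ at h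
    cases h with
    | nil h => simp at hs
    | snoc h1 h2 h3 =>
      obtain ⟨rfl, hx⟩ := List.append_inj' hs rfl
      simp only [List.cons.injEq, and_true] at hx
      subst hx
      exact ⟨_, _, h1, h2, h3⟩
  · rintro ⟨q1, q2, h1, h2, h3⟩
    exact W.snoc h1 h2 h3

theorem W_single_iff {M : LTS Q Lab} {q q' : Q} {x : ELabel Lab} :
    M.W q [x] q' ↔ ∃ q1 q2, M.Eps q q1 ∧ M.VStep q1 x q2 ∧ M.Eps q2 q' := by
  have := W_snoc_iff (M := M) (q := q) (q' := q') (σ := []) (x := x)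
  simpa [W_nil_iff] using this

theorem W_eps {M : LTS Q Lab} {q q1 q2 : Q} {σ : List (ELabel Lab)}
    (h : M.W q σ q1) (h' : M.Eps q1 q2) : M.W q σ q2 := by
  cases h with
  | nil h => exact W.nil (Relation.ReflTransGen.trans h h')
  | snoc h1 h2 h3 => exact W.snoc h1 h2 (Relation.ReflTransGen.trans h3 h')

theorem after_snoc {M : LTS Q Lab} {σ : List (ELabel Lab)} {x : ELabel Lab} :
    M.after (σ ++ [x]) = M.afterSet (M.after σ) [x] := by
  ext q
  simp only [after, afterSet, Set.mem_ofPred_eq, W_snoc_iff, W_single_iff]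
  constructor
  · rintro ⟨q1, q2, h1, h2, h3⟩
    exact ⟨q1, h1, q1, q2, Relation.ReflTransGen.refl, h2, h3⟩
  · rintro ⟨q1, h1, q2, q3, h2, h3, h4⟩
    exact ⟨q2, q3, W_eps h1 h2, h3, h4⟩

theorem W_prefix {M : LTS Q Lab} {σ : List (ELabel Lab)} {x : ELabel Lab} {q q' : Q}
    (h : M.W q (σ ++ [x]) q') : ∃ q1, M.W q σ q1 := by
  obtain ⟨q1, _, h, _⟩ := W_snoc_iff.1 h
  exact ⟨q1, h⟩

theorem Utraces_prefix {M : LTS Q Lab} {σ : List (ELabel Lab)} {x : ELabel Lab}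
    (h : σ ++ [x] ∈ M.Utraces) : σ ∈ M.Utraces := by
  obtain ⟨h1, ⟨q, h2⟩, h3⟩ := h
  refine ⟨fun y hy => h1 y (by simp [hy]), W_prefix h2, ?_⟩
  intro σ1 ℓ σ2 he
  exact h3 σ1 ℓ (σ2 ++ [x]) (by simp [he])

theorem Utraces_snoc {M : LTS Q Lab} {σ : List (ELabel Lab)} {x : ELabel Lab}
    (h : σ ∈ M.Utraces) (hx : ELabel.inL M.L x) (hW : ∃ q', M.W M.q0 (σ ++ [x]) q')
    (hin : ∀ ℓ, x = ELabel.lab ℓ → ℓ ∈ M.I → ∀ q, M.W M.q0 σ q → ∃ q', M.W q [ELabel.lab ℓ] q') :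
    σ ++ [x] ∈ M.Utraces := by
  obtain ⟨h1, ⟨q, h2⟩, h3⟩ := h
  refine ⟨?_, hW, ?_⟩
  · intro y hy
    rw [List.mem_append] at hy
    rcases hy with hy | hy
    · exact h1 y hy
    · rw [List.mem_singleton] at hy; subst hy; exact hx
  · intro σ1 ℓ σ2 he
    rcases List.eq_nil_or_concat σ2 with rfl | ⟨ρ, y, rfl⟩
    · obtain ⟨rfl, hx⟩ := List.append_inj' he rfl
      simp only [List.cons.injEq, and_true] at hx
      exact hin ℓ hx
    · have he' : σ ++ [x] = (σ1 ++ ELabel.lab ℓ :: ρ) ++ [y] := by simpa using he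
      obtain ⟨he', -⟩ := List.append_inj' he' rfl
      exact h3 σ1 ℓ ρ he'

theorem Utraces_nil {M : LTS Q Lab} : [] ∈ M.Utraces :=
  ⟨fun y hy => by simp at hy, ⟨M.q0, W.nil Relation.ReflTransGen.refl⟩,
    fun σ1 ℓ σ2 h => by simp at h⟩

theorem mem_outSet {M : LTS Q Lab} {X : Set Q} {x : ELabel Lab} :
    x ∈ M.outSet X ↔ ∃ q ∈ X, M.outLabel q x := by
  simp [outSet, outq]

theorem mem_inSet {M : LTS Q Lab} {X : Set Q} {ℓ : Lab} :
    ℓ ∈ M.inSet X ↔ ∀ q ∈ X, ℓ ∈ M.I ∧ ∃ q', M.W q [ELabel.lab ℓ] q' := by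
  simp [inSet, inq]

/-- A stable state that weakly enables a label strongly enables it. -/
theorem stable_enabled {M : LTS Q Lab} {q q' : Q} {ℓ : Lab} (hst : ∀ q', ¬ M.T q none q')
    (h : M.W q [ELabel.lab ℓ] q') : ∃ q1, M.T q (some ℓ) q1 := by
  obtain ⟨q1, q2, h1, h2, _⟩ := W_single_iff.1 h
  rcases Relation.ReflTransGen.cases_head h1 with rfl | ⟨c, hc, _⟩
  · exact ⟨q2, h2⟩
  · exact absurd hc (hst c)

end LTS

open LTS

theorem projD_snoc_pos {Lab : Type} {σ : List (ELabel Lab)} {x : ELabel Lab} {Ls : Set Lab}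
    (h : ELabel.inL Ls x) : projD (σ ++ [x]) Ls = projD σ Ls ++ [x] := by
  simp [projD, h]

theorem projD_snoc_neg {Lab : Type} {σ : List (ELabel Lab)} {x : ELabel Lab} {Ls : Set Lab}
    (h : ¬ ELabel.inL Ls x) : projD (σ ++ [x]) Ls = projD σ Ls := by
  simp [projD, h]

section
variable {Qa Qb Lab : Type} {a : LTS Qa Lab} {b : LTS Qb Lab}

theorem par_eps {p p' : Qa} {q q' : Qb} (h1 : a.Eps p p') (h2 : b.Eps q q') :
    (par a b).Eps (p, q) (p', q') := by
  have e1 : (par a b).Eps (p, q) (p', q) := by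
    induction h1 with
    | refl => exact Relation.ReflTransGen.refl
    | tail _ h ih => exact Relation.ReflTransGen.tail ih (Or.inl ⟨h, rfl⟩)
  have e2 : (par a b).Eps (p', q) (p', q') := by
    induction h2 with
    | refl => exact Relation.ReflTransGen.refl
    | tail _ h ih => exact Relation.ReflTransGen.tail ih (Or.inr ⟨h, rfl⟩)
  exact Relation.ReflTransGen.trans e1 e2

theorem par_eps_split {r r' : Qa × Qb} (h : (par a b).Eps r r') :
    a.Eps r.1 r'.1 ∧ b.Eps r.2 r'.2 := by
  induction h with
  | refl => exact ⟨Relation.ReflTransGen.refl, Relation.ReflTransGen.refl⟩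
  | tail _ h ih =>
    rcases h with ⟨h, he⟩ | ⟨h, he⟩
    · exact ⟨Relation.ReflTransGen.tail ih.1 h, by rw [he]; exact ih.2⟩
    · exact ⟨by rw [he]; exact ih.1, Relation.ReflTransGen.tail ih.2 h⟩

theorem par_quiescent {p : Qa} {q : Qb} (hp : a.Quiescent p) (hq : b.Quiescent q)
    (hda : Disjoint a.I a.U) (hdb : Disjoint b.I b.U) : (par a b).Quiescent (p, q) := by
  refine ⟨?_, ?_⟩
  · rintro x hx ⟨p', q'⟩ h
    rcases hx with hx | hx
    · rcases h with ⟨_, _, h, _⟩ | ⟨_, h, _⟩ | ⟨_, _, h, _⟩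
      · exact hp.1 x hx _ h
      · exact h (Or.inr hx)
      · exact hp.1 x hx _ h
    · rcases h with ⟨_, h, _⟩ | ⟨_, _, h, _⟩ | ⟨_, _, _, h⟩
      · exact h (Or.inr hx)
      · exact hq.1 x hx _ h
      · exact hq.1 x hx _ h
  · rintro ⟨p', q'⟩ (⟨h, _⟩ | ⟨h, _⟩)
    · exact hp.2 _ h
    · exact hq.2 _ h

theorem par_quiescent_split {p : Qa} {q : Qb} (hU : Composable a b)
    (h1 : ∀ ℓ ∈ b.U, ℓ ∈ a.I → (∃ q', b.T q (some ℓ) q') → ∃ p', a.W p [ELabel.lab ℓ] p')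
    (h2 : ∀ ℓ ∈ a.U, ℓ ∈ b.I → (∃ p', a.T p (some ℓ) p') → ∃ q', b.W q [ELabel.lab ℓ] q')
    (h : (par a b).Quiescent (p, q)) : a.Quiescent p ∧ b.Quiescent q := by
  have ta : ∀ p', ¬ a.T p none p' := fun p' hp => h.2 (p', q) (Or.inl ⟨hp, rfl⟩)
  have tb : ∀ q', ¬ b.T q none q' := fun q' hq => h.2 (p, q') (Or.inr ⟨hq, rfl⟩)
  have hU' : ∀ ℓ, ℓ ∈ a.U → ℓ ∈ b.U → False := fun ℓ ha hb => by
    have : ℓ ∈ a.U ∩ b.U := ⟨ha, hb⟩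
    rw [hU] at this; exact this
  refine ⟨⟨?_, ta⟩, ⟨?_, tb⟩⟩
  · intro x hx p' hp
    by_cases hb : x ∈ b.L
    · rcases hb with hb | hb
      · obtain ⟨q', hq⟩ := h2 x hx hb ⟨p', hp⟩
        obtain ⟨q1, hq⟩ := stable_enabled tb hq
        exact h.1 x (Or.inl hx) (p', q1) (Or.inr (Or.inr ⟨Or.inr hx, Or.inl hb, hp, hq⟩))
      · exact hU' x hx hb
    · exact h.1 x (Or.inl hx) (p', q) (Or.inl ⟨Or.inr hx, hb, hp, rfl⟩)
  · intro x hx q' hq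
    by_cases ha : x ∈ a.L
    · rcases ha with ha | ha
      · obtain ⟨p', hp⟩ := h1 x hx ha ⟨q', hq⟩
        obtain ⟨p1, hp⟩ := stable_enabled ta hp
        exact h.1 x (Or.inr hx) (p1, q') (Or.inr (Or.inr ⟨Or.inl ha, Or.inr hx, hp, hq⟩))
      · exact hU' x ha hx
    · exact h.1 x (Or.inr hx) (p, q') (Or.inr (Or.inl ⟨Or.inr hx, ha, hq, rfl⟩))

theorem par_W (hda : Disjoint a.I a.U) (hdb : Disjoint b.I b.U) (σ : List (ELabel Lab)) :
    TraceIn (a.L ∪ b.L) σ → ∀ p q, a.W a.q0 (projD σ a.L) p → b.W b.q0 (projD σ b.L) q →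
      (par a b).W (par a b).q0 σ (p, q) := by
  induction σ using List.reverseRecOn with
  | nil =>
    intro _ p q h1 h2
    exact W.nil (par_eps (W_nil_iff.1 h1) (W_nil_iff.1 h2))
  | append_singleton σ x ih =>
    intro ht p q h1 h2
    have ht' : TraceIn (a.L ∪ b.L) σ := fun y hy => ht y (by simp [hy])
    have hx := ht x (by simp)
    specialize ih ht'
    by_cases ha : ELabel.inL a.L x
    · rw [projD_snoc_pos ha, W_snoc_iff] at h1
      obtain ⟨p1, p2, h11, h12, h13⟩ := h1
      by_cases hb : ELabel.inL b.L x
      · rw [projD_snoc_pos hb, W_snoc_iff] at h2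
        obtain ⟨q1, q2, h21, h22, h23⟩ := h2
        refine W.snoc (ih p1 q1 h11 h21) (q2 := (p2, q2)) ?_ (par_eps h13 h23)
        cases x with
        | lab ℓ => exact Or.inr (Or.inr ⟨ha, hb, h12, h22⟩)
        | delta =>
          obtain ⟨rfl, h12⟩ := h12
          obtain ⟨rfl, h22⟩ := h22
          exact ⟨rfl, par_quiescent h12 h22 hda hdb⟩
      · rw [projD_snoc_neg hb] at h2
        refine W.snoc (ih p1 q h11 h2) (q2 := (p2, q)) ?_
          (par_eps h13 Relation.ReflTransGen.refl)
        cases x with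
        | lab ℓ => exact Or.inl ⟨ha, hb, h12, rfl⟩
        | delta => exact absurd trivial hb
    · rw [projD_snoc_neg ha] at h1
      cases x with
      | delta => exact absurd trivial ha
      | lab ℓ =>
        have hb : ELabel.inL b.L (ELabel.lab ℓ) := by
          rcases hx with hx | hx
          · exact absurd hx ha
          · exact hx
        rw [projD_snoc_pos hb, W_snoc_iff] at h2
        obtain ⟨q1, q2, h21, h22, h23⟩ := h2
        exact W.snoc (ih p q1 h1 h21) (q2 := (p, q2)) (Or.inr (Or.inl ⟨hb, ha, h22, rfl⟩))
          (par_eps Relation.ReflTransGen.refl h23)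

theorem par_split_step {σ : List (ELabel Lab)} {x : ELabel Lab} {p : Qa} {q : Qb}
    (ih : ∀ p q, (par a b).W (par a b).q0 σ (p, q) →
      a.W a.q0 (projD σ a.L) p ∧ b.W b.q0 (projD σ b.L) q)
    (hq : ∀ p q, (par a b).W (par a b).q0 σ (p, q) → (par a b).Quiescent (p, q) →
      a.Quiescent p ∧ b.Quiescent q)
    (h : (par a b).W (par a b).q0 (σ ++ [x]) (p, q)) :
    a.W a.q0 (projD (σ ++ [x]) a.L) p ∧ b.W b.q0 (projD (σ ++ [x]) b.L) q := by
  obtain ⟨⟨p1, q1⟩, ⟨p2, q2⟩, h1, h2, h3⟩ := W_snoc_iff.1 h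
  obtain ⟨e1, e2⟩ := par_eps_split h3
  obtain ⟨i1, i2⟩ := ih _ _ h1
  cases x with
  | delta =>
    obtain ⟨he, hqu⟩ := h2
    obtain ⟨rfl, rfl⟩ := Prod.mk.inj he
    obtain ⟨k1, k2⟩ := hq _ _ h1 hqu
    rw [projD_snoc_pos (Ls := a.L) (x := ELabel.delta) trivial, projD_snoc_pos (Ls := b.L) (x := ELabel.delta) trivial]
    exact ⟨W.snoc i1 ⟨rfl, k1⟩ e1, W.snoc i2 ⟨rfl, k2⟩ e2⟩
  | lab ℓ =>
    rcases h2 with ⟨ha, hb, t, he⟩ | ⟨hb, ha, t, he⟩ | ⟨ha, hb, t, t'⟩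
    · simp only at he t
      subst he
      rw [projD_snoc_pos (Ls := a.L) (x := ELabel.lab ℓ) ha, projD_snoc_neg (Ls := b.L) (x := ELabel.lab ℓ) hb]
      exact ⟨W.snoc i1 t e1, W_eps i2 e2⟩
    · simp only at he t
      subst he
      rw [projD_snoc_neg (Ls := a.L) (x := ELabel.lab ℓ) ha, projD_snoc_pos (Ls := b.L) (x := ELabel.lab ℓ) hb]
      exact ⟨W_eps i1 e1, W.snoc i2 t e2⟩
    · rw [projD_snoc_pos (Ls := a.L) (x := ELabel.lab ℓ) ha, projD_snoc_pos (Ls := b.L) (x := ELabel.lab ℓ) hb]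
      exact ⟨W.snoc i1 t e1, W.snoc i2 t' e2⟩

theorem par_split_enabled (hU : Composable a b) (ha : a.InputEnabled) (hb : b.InputEnabled)
    (σ : List (ELabel Lab)) : ∀ p q, (par a b).W (par a b).q0 σ (p, q) →
      a.W a.q0 (projD σ a.L) p ∧ b.W b.q0 (projD σ b.L) q := by
  induction σ using List.reverseRecOn with
  | nil =>
    intro p q h
    obtain ⟨e1, e2⟩ := par_eps_split (W_nil_iff.1 h)
    exact ⟨W.nil e1, W.nil e2⟩
  | append_singleton σ x ih =>
    intro p q h
    refine par_split_step ih ?_ h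
    intro p q _ hqu
    exact par_quiescent_split hU (fun ℓ _ hi _ => ha p ℓ hi) (fun ℓ _ hi _ => hb q ℓ hi) hqu

theorem par_L : (par a b).L = a.L ∪ b.L := by
  ext ℓ
  simp only [L, par, Set.mem_union, Set.mem_sdiff]
  tauto

/-- A weak step of the composition, with a label in `a.L`, projects to a weak step of `a`. -/
theorem par_weak_left {ℓ : Lab} (hl : ℓ ∈ a.L) {r r' : Qa × Qb}
    (h : (par a b).W r [ELabel.lab ℓ] r') : ∃ p', a.W r.1 [ELabel.lab ℓ] p' := by
  obtain ⟨r1, r2, h1, h2, h3⟩ := W_single_iff.1 h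
  have t : a.T r1.1 (some ℓ) r2.1 := by
    rcases h2 with ⟨_, _, t, _⟩ | ⟨_, h, _⟩ | ⟨_, _, t, _⟩
    · exact t
    · exact absurd hl h
    · exact t
  exact ⟨r2.1, W_single_iff.2 ⟨_, _, (par_eps_split h1).1, t, Relation.ReflTransGen.refl⟩⟩

theorem par_weak_right {ℓ : Lab} (hl : ℓ ∈ b.L) {r r' : Qa × Qb}
    (h : (par a b).W r [ELabel.lab ℓ] r') : ∃ q', b.W r.2 [ELabel.lab ℓ] q' := by
  obtain ⟨r1, r2, h1, h2, h3⟩ := W_single_iff.1 h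
  have t : b.T r1.2 (some ℓ) r2.2 := by
    rcases h2 with ⟨_, h, _⟩ | ⟨_, _, t, _⟩ | ⟨_, _, _, t⟩
    · exact absurd hl h
    · exact t
    · exact t
  exact ⟨r2.2, W_single_iff.2 ⟨_, _, (par_eps_split h1).2, t, Relation.ReflTransGen.refl⟩⟩

/-- In related state sets, quiescence of the composition is joint quiescence. -/
theorem eco_quiescent_split (hU : Composable a b) {R : Set (Set Qa × Set Qb)}
    (hR : IsEcosim a b R) {X : Set Qa} {Y : Set Qb} (hXY : (X, Y) ∈ R) {p : Qa} {q : Qb}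
    (hp : p ∈ X) (hq : q ∈ Y) (h : (par a b).Quiescent (p, q)) :
    a.Quiescent p ∧ b.Quiescent q := by
  obtain ⟨c1, c2, -⟩ := hR.2 X Y hXY
  refine par_quiescent_split hU ?_ ?_ h
  · intro ℓ hu hi ht
    exact (mem_inSet.1 (c1 ℓ (mem_outSet.2 ⟨q, hq, hu, ht⟩) hi).1 p hp).2
  · intro ℓ hu hi ht
    exact (mem_inSet.1 (c2 ℓ (mem_outSet.2 ⟨p, hp, hu, ht⟩) hi).1 q hq).2

theorem eco_main (hU : Composable a b) (hda : Disjoint a.I a.U) (hdb : Disjoint b.I b.U)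
    {R : Set (Set Qa × Set Qb)} (hR : IsEcosim a b R) (σ : List (ELabel Lab)) :
    σ ∈ (par a b).Utraces →
      (a.after (projD σ a.L), b.after (projD σ b.L)) ∈ R ∧
      projD σ a.L ∈ a.Utraces ∧ projD σ b.L ∈ b.Utraces ∧
      ∀ p q, (par a b).W (par a b).q0 σ (p, q) →
        a.W a.q0 (projD σ a.L) p ∧ b.W b.q0 (projD σ b.L) q := by
  have hU' : ∀ ℓ, ℓ ∈ a.U → ℓ ∈ b.U → False := fun ℓ ha hb => by
    have : ℓ ∈ a.U ∩ b.U := ⟨ha, hb⟩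
    rw [hU] at this; exact this
  induction σ using List.reverseRecOn with
  | nil =>
    intro _
    refine ⟨hR.1, Utraces_nil, Utraces_nil, ?_⟩
    intro p q h
    obtain ⟨e1, e2⟩ := par_eps_split (W_nil_iff.1 h)
    exact ⟨W.nil e1, W.nil e2⟩
  | append_singleton σ x ih =>
    intro hσ
    have hσ' := Utraces_prefix hσ
    obtain ⟨iR, iA, iB, iS⟩ := ih hσ'
    have hsplit : ∀ p q, (par a b).W (par a b).q0 (σ ++ [x]) (p, q) →
        a.W a.q0 (projD (σ ++ [x]) a.L) p ∧ b.W b.q0 (projD (σ ++ [x]) b.L) q := by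
      intro p q h
      refine par_split_step iS ?_ h
      intro p q hw hqu
      exact eco_quiescent_split hU hR iR (iS p q hw).1 (iS p q hw).2 hqu
    obtain ⟨ht, ⟨⟨p, q⟩, hw⟩, hin⟩ := hσ
    have ht0 : TraceIn (a.L ∪ b.L) σ := by rw [← par_L]; exact hσ'.1
    have hx := ht x (by simp)
    rw [par_L] at hx
    obtain ⟨wp, wq⟩ := hsplit p q hw
    obtain ⟨⟨p1, q1⟩, ⟨p2, q2⟩, hw1, hv, -⟩ := W_snoc_iff.1 hw
    obtain ⟨wp1, wq1⟩ := iS _ _ hw1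
    obtain ⟨c1, c2, c3, c4, c5, c6⟩ := hR.2 _ _ iR
    cases x with
    | delta =>
      have ea := projD_snoc_pos (σ := σ) (Ls := a.L) (x := ELabel.delta) trivial
      have eb := projD_snoc_pos (σ := σ) (Ls := b.L) (x := ELabel.delta) trivial
      rw [ea] at wp
      rw [eb] at wq
      rw [ea, eb] at hsplit ⊢
      refine ⟨?_, Utraces_snoc iA trivial ⟨_, wp⟩ (fun ℓ h => by cases h),
        Utraces_snoc iB trivial ⟨_, wq⟩ (fun ℓ h => by cases h), hsplit⟩
      obtain ⟨k1, k2⟩ := eco_quiescent_split hU hR iR wp1 wq1 hv.2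
      rw [after_snoc, after_snoc]
      exact c6 (mem_outSet.2 ⟨p1, wp1, k1⟩) (mem_outSet.2 ⟨q1, wq1, k2⟩)
    | lab ℓ =>
      -- inputs of the composition are accepted by the components
      have inA : ℓ ∈ (par a b).I → ℓ ∈ a.I → ℓ ∈ a.inSet (a.after (projD σ a.L)) := by
        intro hI hA
        refine mem_inSet.2 fun p' hp' => ⟨hA, ?_⟩
        obtain ⟨r, hr⟩ := hin σ ℓ [] rfl hI (p', q1) (par_W hda hdb σ ht0 p' q1 hp' wq1)
        exact par_weak_left (Or.inl hA) hr
      have inB : ℓ ∈ (par a b).I → ℓ ∈ b.I → ℓ ∈ b.inSet (b.after (projD σ b.L)) := by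
        intro hI hB
        refine mem_inSet.2 fun q' hq' => ⟨hB, ?_⟩
        obtain ⟨r, hr⟩ := hin σ ℓ [] rfl hI (p1, q') (par_W hda hdb σ ht0 p1 q' wp1 hq')
        exact par_weak_right (Or.inl hB) hr
      have outA : ℓ ∈ a.U → ELabel.lab ℓ ∈ a.outSet (a.after (projD σ a.L)) := by
        intro hu
        refine mem_outSet.2 ⟨p1, wp1, hu, p2, ?_⟩
        rcases hv with ⟨_, _, t, _⟩ | ⟨_, h, _⟩ | ⟨_, _, t, _⟩
        · exact t
        · exact absurd (Or.inr hu) h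
        · exact t
      have outB : ℓ ∈ b.U → ELabel.lab ℓ ∈ b.outSet (b.after (projD σ b.L)) := by
        intro hu
        refine mem_outSet.2 ⟨q1, wq1, hu, q2, ?_⟩
        rcases hv with ⟨_, h, _⟩ | ⟨_, _, t, _⟩ | ⟨_, _, _, t⟩
        · exact absurd (Or.inr hu) h
        · exact t
        · exact t
      -- all inputs of the components are accepted
      have accA : ℓ ∈ a.I → ℓ ∈ a.inSet (a.after (projD σ a.L)) := by
        intro hA
        by_cases hu : ℓ ∈ b.U
        · exact (c1 ℓ (outB hu) hA).1
        · exact inA (Or.inl ⟨hA, hu⟩) hA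
      have accB : ℓ ∈ b.I → ℓ ∈ b.inSet (b.after (projD σ b.L)) := by
        intro hB
        by_cases hu : ℓ ∈ a.U
        · exact (c2 ℓ (outA hu) hB).1
        · exact inB (Or.inr ⟨hB, hu⟩) hB
      have uA : projD (σ ++ [ELabel.lab ℓ]) a.L ∈ a.Utraces := by
        by_cases ha : ℓ ∈ a.L
        · rw [projD_snoc_pos (Ls := a.L) (x := ELabel.lab ℓ) ha] at wp ⊢
          refine Utraces_snoc iA ha ⟨_, wp⟩ ?_
          intro ℓ' he hA q hq
          cases he
          exact (mem_inSet.1 (accA hA) q hq).2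
        · rw [projD_snoc_neg (Ls := a.L) (x := ELabel.lab ℓ) ha]; exact iA
      have uB : projD (σ ++ [ELabel.lab ℓ]) b.L ∈ b.Utraces := by
        by_cases hb : ℓ ∈ b.L
        · rw [projD_snoc_pos (Ls := b.L) (x := ELabel.lab ℓ) hb] at wq ⊢
          refine Utraces_snoc iB hb ⟨_, wq⟩ ?_
          intro ℓ' he hB q hq
          cases he
          exact (mem_inSet.1 (accB hB) q hq).2
        · rw [projD_snoc_neg (Ls := b.L) (x := ELabel.lab ℓ) hb]; exact iB
      refine ⟨?_, uA, uB, hsplit⟩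
      by_cases ha : ℓ ∈ a.L
      · by_cases hb : ℓ ∈ b.L
        · rw [projD_snoc_pos (Ls := a.L) (x := ELabel.lab ℓ) ha, projD_snoc_pos (Ls := b.L) (x := ELabel.lab ℓ) hb, after_snoc, after_snoc]
          rcases ha with ha | ha
          · rcases hb with hb | hb
            · exact c5 ℓ (accA ha) (accB hb)
            · exact (c1 ℓ (outB hb) ha).2
          · rcases hb with hb | hb
            · exact (c2 ℓ (outA ha) hb).2
            · exact (hU' ℓ ha hb).elim
        · rw [projD_snoc_pos (Ls := a.L) (x := ELabel.lab ℓ) ha, projD_snoc_neg (Ls := b.L) (x := ELabel.lab ℓ) hb, after_snoc]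
          exact c4 ℓ (ha.elim (fun h => Or.inr (accA h)) (fun h => Or.inl (outA h))) hb
      · have hb : ℓ ∈ b.L := by
          rcases hx with h | h
          · exact absurd h ha
          · exact h
        rw [projD_snoc_neg (Ls := a.L) (x := ELabel.lab ℓ) ha, projD_snoc_pos (Ls := b.L) (x := ELabel.lab ℓ) hb, after_snoc]
        exact c3 ℓ (hb.elim (fun h => Or.inr (accB h)) (fun h => Or.inl (outB h))) ha

end

/-- if `s eco e`, `i_s uioco s` and `i_e uioco e`,
then `i_s ∥ i_e uioco s ∥ e`. -/
theorem compositional_testing_eco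
    {Qs Qe Qis Qie Lab : Type}
    (s : LTS Qs Lab) (e : LTS Qe Lab) (iS : LTS Qis Lab) (iE : LTS Qie Lab)
    (hs : s.WellFormed) (he : e.WellFormed)
    (hiS : iS.WellFormed) (hiE : iE.WellFormed)
    (hcomp : Composable s e)
    (hiSenabled : iS.InputEnabled) (hiEenabled : iE.InputEnabled)
    (hI1 : iS.I = s.I) (hU1 : iS.U = s.U)
    (hI2 : iE.I = e.I) (hU2 : iE.U = e.U)
    (heco : Eco s e)
    (huioco1 : Uioco iS s) (huioco2 : Uioco iE e) :
    Uioco (par iS iE) (par s e) := by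
  obtain ⟨R, hR⟩ := heco
  have hda := hs.2.2.1
  have hdb := he.2.2.1
  have hL1 : iS.L = s.L := by simp [LTS.L, hI1, hU1]
  have hL2 : iE.L = e.L := by simp [LTS.L, hI2, hU2]
  have hcomp' : Composable iS iE := by rw [Composable, hU1, hU2]; exact hcomp
  intro σ hσ x hx
  obtain ⟨iR, uA, uB, -⟩ := eco_main hcomp hda hdb hR σ hσ
  have ht : TraceIn (s.L ∪ e.L) σ := by rw [← par_L]; exact hσ.1
  obtain ⟨⟨p, q⟩, hpq, hx⟩ := mem_outSet.1 hx
  obtain ⟨wp, wq⟩ := par_split_enabled hcomp' hiSenabled hiEenabled σ p q hpq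
  rw [hL1] at wp
  rw [hL2] at wq
  obtain ⟨c1, c2, -⟩ := hR.2 _ _ iR
  obtain ⟨ps, hps⟩ := uA.2.1
  obtain ⟨qe, hqe⟩ := uB.2.1
  cases x with
  | delta =>
    obtain ⟨k1, k2⟩ := par_quiescent_split hcomp' (fun ℓ _ hi _ => hiSenabled p ℓ hi)
      (fun ℓ _ hi _ => hiEenabled q ℓ hi) hx
    obtain ⟨p', hp', kp⟩ := mem_outSet.1
      (huioco1 _ uA ((mem_outSet (x := ELabel.delta)).2 ⟨p, wp, k1⟩))
    obtain ⟨q', hq', kq⟩ := mem_outSet.1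
      (huioco2 _ uB ((mem_outSet (x := ELabel.delta)).2 ⟨q, wq, k2⟩))
    exact mem_outSet.2 ⟨(p', q'), par_W hda hdb σ ht p' q' hp' hq', par_quiescent kp kq hda hdb⟩
  | lab ℓ =>
    obtain ⟨hu, ⟨p2, q2⟩, hv⟩ := hx
    have hu' : ℓ ∈ s.U ∪ e.U := by rw [← hU1, ← hU2]; exact hu
    rcases hu' with hu' | hu'
    · have t : iS.T p (some ℓ) p2 := by
        rcases hv with ⟨_, _, t, _⟩ | ⟨_, h, _⟩ | ⟨_, _, t, _⟩
        · exact t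
        · exact absurd (hL1 ▸ Or.inr hu') h
        · exact t
      have ho := huioco1 _ uA ((mem_outSet (x := (ELabel.lab ℓ))).2 ⟨p, wp, ⟨hU1 ▸ hu', p2, t⟩⟩)
      obtain ⟨p', hp', -, p'', tp⟩ := mem_outSet.1 ho
      by_cases hb : ℓ ∈ e.L
      · rcases hb with hb | hb
        · obtain ⟨q'', hq''⟩ := (mem_inSet.1 (c2 ℓ ho hb).1 qe hqe).2
          obtain ⟨q3, q4, e1, tq, -⟩ := W_single_iff.1 hq''
          exact mem_outSet.2 ⟨(p', q3), par_W hda hdb σ ht p' q3 hp' (W_eps hqe e1),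
            Or.inl hu', (p'', q4), Or.inr (Or.inr ⟨Or.inr hu', Or.inl hb, tp, tq⟩)⟩
        · have : ℓ ∈ s.U ∩ e.U := ⟨hu', hb⟩
          rw [hcomp] at this; exact this.elim
      · exact mem_outSet.2 ⟨(p', qe), par_W hda hdb σ ht p' qe hp' hqe,
          Or.inl hu', (p'', qe), Or.inl ⟨Or.inr hu', hb, tp, rfl⟩⟩
    · have t : iE.T q (some ℓ) q2 := by
        rcases hv with ⟨_, h, _⟩ | ⟨_, _, t, _⟩ | ⟨_, _, _, t⟩
        · exact absurd (hL2 ▸ Or.inr hu') h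
        · exact t
        · exact t
      have ho := huioco2 _ uB ((mem_outSet (x := (ELabel.lab ℓ))).2 ⟨q, wq, ⟨hU2 ▸ hu', q2, t⟩⟩)
      obtain ⟨q', hq', -, q'', tq⟩ := mem_outSet.1 ho
      by_cases ha : ℓ ∈ s.L
      · rcases ha with ha | ha
        · obtain ⟨p'', hp''⟩ := (mem_inSet.1 (c1 ℓ ho ha).1 ps hps).2
          obtain ⟨p3, p4, e1, tp, -⟩ := W_single_iff.1 hp''
          exact mem_outSet.2 ⟨(p3, q'), par_W hda hdb σ ht p3 q' (W_eps hps e1) hq',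
            Or.inr hu', (p4, q''), Or.inr (Or.inr ⟨Or.inl ha, Or.inr hu', tp, tq⟩)⟩
        · have : ℓ ∈ s.U ∩ e.U := ⟨ha, hu'⟩
          rw [hcomp] at this; exact this.elim
      · exact mem_outSet.2 ⟨(ps, q'), par_W hda hdb σ ht ps q' hps hq',
          Or.inr hu', (ps, q''), Or.inr (Or.inl ⟨Or.inr hu', ha, tq, rfl⟩)⟩
end
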